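/- Let S₁(X) denote the number of integers q ≤ X with q ≡ 1 (mod 4) for which the Erdős conjecture is false mod q. Then limsup_{X→∞} S₁(X)/(X/4) ≤ ∏_{p odd prime} (1 + p/((p-1)(p²-1))) − 1, where the product is over all odd primes p. -/

import Mathlib

open Filter Topology Finset

/-- `f : ℕ → ℤ` is Erdősian mod `q`: periodic with period `q`, takes values `±1`
off multiples of `q`, and `0` on multiples of `q`. -/
def IsErdosian (q : ℕ) (f : ℕ → ℤ) : Prop :=
  (∀ n : ℕ, 1 ≤ n → f (n + q) = f n) ∧
  (∀ n : ℕ, 1 ≤ n → ¬ q ∣ n → f n = 1 ∨ f n = -1) ∧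
  (∀ n : ℕ, 1 ≤ n → q ∣ n → f n = 0)

/-- The Erdős conjecture is false mod `q`: there is an Erdősian function mod `q`
whose partial sums `∑_{n=1}^N f(n)/n` tend to `0`. -/
def ErdosConjectureFalse (q : ℕ) : Prop :=
  ∃ f : ℕ → ℤ, IsErdosian q f ∧
    Tendsto (fun N : ℕ => ∑ n ∈ Finset.Icc 1 N, (f n : ℝ) / n) atTop (nhds 0)

/-- The Erdős conjecture holds (is true) mod `q`. -/
def ErdosConjectureHolds (q : ℕ) : Prop := ¬ ErdosConjectureFalse q

/-!
Suppose `∑ f(n) / n = 0` for an Erdősian `f` mod `q`. The finite Fourier transform expresses each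
`∑ f(t n) / n`, for `t` coprime to `q`, as a linear form in the numbers `log (1 - ζ)`, `ζ ^ q = 1`,
`ζ ≠ 1`, and the coefficients of these forms are conjugate in the `q`-th cyclotomic field `K`. Let
`Λ g` be the value belonging to the automorphism `g` of `K`. Since traces of algebraic integers are
rational integers, `exp (∑ g, Λ g * g x)` lies in `K` for every algebraic integer `x` of `K`. In
place of Baker's theorem, a Gelfond–Schneider type argument (Siegel's lemma, a Schwarz lemma and the
size inequality for algebraic integers) shows that such a `Λ` cannot have a zero unless it vanishes
identically: a single zero leaves only `[K : ℚ] - 1` directions of differentiation, which makes room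
for an auxiliary function. Hence `∑ f(t n) / n = 0` for every `t` coprime to `q`.

Twisting by a Dirichlet character `χ` mod `q` and dividing by `L(1, χ) ≠ 0` then gives
`∑ f(m) / m = 0`, summed over the `m` all of whose prime factors divide `q`. The term `m = 1` has
absolute value `1`, so the others contribute at least as much:
`2 ≤ ∏_{p ∣ q} (1 - 1 / p)⁻¹ ≤ ∑_{d ∣ q} 1 / φ(d)`.

Hence the moduli in question are counted with weight at least `1` by `∑_{d ∣ q} 1 / φ(d) - 1 ≥ 0`,
whose average over `q ≡ 1 (mod 4)` is `∑_{d odd} 1 / (d φ(d)) - 1`, an Euler product minus `1`.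
-/

/-! ### Entire functions with many zeros -/

section Schwarz

theorem exists_differentiable_eq_sub_pow_mul {g : ℂ → ℂ} (hg : Differentiable ℂ g) (a : ℂ)
    {k : ℕ} (hk : (k : ℕ∞) ≤ analyticOrderAt g a) :
    ∃ h : ℂ → ℂ, Differentiable ℂ h ∧ ∀ t, g t = (t - a) ^ k * h t := by
  induction k with
  | zero => exact ⟨g, hg, by simp⟩
  | succ k ih =>
    obtain ⟨h, hh, hgh⟩ := ih (le_trans (by exact_mod_cast Nat.le_succ k) hk)
    have ha : h a = 0 := by
      by_contra hne
      have hord : analyticOrderAt g a = k := by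
        rw [(hg.analyticAt a).analyticOrderAt_eq_natCast]
        exact ⟨h, hh.analyticAt a, hne, Eventually.of_forall fun t => by simp [hgh t]⟩
      rw [hord] at hk
      exact absurd (Nat.cast_le.1 hk) (by simp)
    refine ⟨dslope h a, ?_, fun t => ?_⟩
    · rw [← differentiableOn_univ] at hh ⊢
      exact (Complex.differentiableOn_dslope univ_mem).2 hh
    · have hslope : (t - a) * dslope h a t = h t := by
        simpa [ha] using sub_smul_dslope h a t
      rw [hgh t, pow_succ, mul_assoc, hslope]

theorem exists_differentiable_eq_prod_sub_pow_mul {g : ℂ → ℂ} (hg : Differentiable ℂ g) {k : ℕ}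
    {T : Finset ℂ} (hT : ∀ a ∈ T, (k : ℕ∞) ≤ analyticOrderAt g a) :
    ∃ h : ℂ → ℂ, Differentiable ℂ h ∧ ∀ t, g t = (∏ a ∈ T, (t - a) ^ k) * h t := by
  induction T using Finset.induction_on with
  | empty => exact ⟨g, hg, by simp⟩
  | insert b T hb ih =>
    obtain ⟨h, hh, hgh⟩ := ih fun a ha => hT a (mem_insert_of_mem ha)
    set P : ℂ → ℂ := fun t => ∏ a ∈ T, (t - a) ^ k with hP
    have hPd : Differentiable ℂ P := by fun_prop
    have hPb : analyticOrderAt P b = 0 := by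
      rw [(hPd.analyticAt b).analyticOrderAt_eq_zero, hP, Finset.prod_ne_zero_iff]
      exact fun a ha => pow_ne_zero _ (sub_ne_zero.2 (ne_of_mem_of_not_mem ha hb).symm)
    have hord : (k : ℕ∞) ≤ analyticOrderAt h b := by
      have hgb := hT b (mem_insert_self b T)
      rwa [show g = P * h from funext hgh, analyticOrderAt_mul (hPd.analyticAt b)
        (hh.analyticAt b), hPb, zero_add] at hgb
    obtain ⟨h', hh', hhh'⟩ := exists_differentiable_eq_sub_pow_mul hh b hord
    refine ⟨h', hh', fun t => ?_⟩
    rw [hgh t, hhh' t, prod_insert hb]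
    ring

theorem iteratedDeriv_sub_pow_mul_self {H : ℂ → ℂ} (hH : Differentiable ℂ H) (a : ℂ) (k : ℕ) :
    iteratedDeriv k (fun t => (t - a) ^ k * H t) a = k.factorial * H a := by
  induction k generalizing H with
  | zero => simp
  | succ k ih =>
    have hderiv : deriv (fun t => (t - a) ^ (k + 1) * H t) =
        fun t => (t - a) ^ k * (((k : ℂ) + 1) * H t + (t - a) * deriv H t) := by
      ext t
      have hpow : HasDerivAt (fun t : ℂ => (t - a) ^ (k + 1))
          (((k + 1 : ℕ) : ℂ) * (t - a) ^ k * 1) t :=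
        ((hasDerivAt_id t).sub_const a).fun_pow (k + 1)
      rw [(hpow.fun_mul (hH t).hasDerivAt).deriv]
      push_cast
      ring
    have hH' : Differentiable ℂ (deriv H) := (hH.contDiff (n := 2)).differentiable_deriv_two
    rw [iteratedDeriv_succ', hderiv, Nat.factorial_succ,
      ih ((hH.const_mul _).fun_add ((differentiable_fun_id.sub_const a).fun_mul hH'))]
    push_cast
    ring

theorem norm_le_div_of_norm_prod_sub_pow_mul_le {h : ℂ → ℂ} (hh : Differentiable ℂ h)
    {T : Finset ℂ} {k : ℕ} {R B : ℝ} (hR : 0 < R) (hT : ∀ a ∈ T, ‖a‖ ≤ R / 2)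
    (hB : ∀ t : ℂ, ‖t‖ = R → ‖(∏ a ∈ T, (t - a) ^ k) * h t‖ ≤ B) {z : ℂ} (hz : ‖z‖ < R) :
    ‖h z‖ ≤ B / (R / 2) ^ (k * #T) := by
  have hprod (t : ℂ) (ht : ‖t‖ = R) : (R / 2) ^ (k * #T) ≤ ‖∏ a ∈ T, (t - a) ^ k‖ := by
    rw [pow_mul, norm_prod, ← prod_const]
    refine prod_le_prod (fun _ _ => by positivity) fun a ha => ?_
    rw [norm_pow]
    refine pow_le_pow_left₀ (by positivity) ?_ k
    linarith [norm_sub_norm_le t a, hT a ha]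
  refine Complex.norm_le_of_forall_mem_frontier_norm_le (U := Metric.ball 0 R)
    Metric.isBounded_ball hh.diffContOnCl (fun t ht => ?_) (subset_closure (by simpa using hz))
  have ht : ‖t‖ = R := by simpa [frontier_ball _ hR.ne'] using ht
  rw [le_div_iff₀ (by positivity)]
  calc ‖h t‖ * (R / 2) ^ (k * #T) ≤ ‖h t‖ * ‖∏ a ∈ T, (t - a) ^ k‖ := by
        gcongr
        exact hprod t ht
    _ = ‖(∏ a ∈ T, (t - a) ^ k) * h t‖ := by rw [norm_mul, mul_comm]
    _ ≤ B := hB t ht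

theorem norm_prod_erase_sub_pow_le {T : Finset ℂ} {a : ℂ} {k : ℕ} {δ : ℝ} (hδ : 1 ≤ δ)
    (hT : ∀ b ∈ T, ‖a - b‖ ≤ δ) : ‖∏ b ∈ T.erase a, (a - b) ^ k‖ ≤ δ ^ (k * #T) := by
  calc ‖∏ b ∈ T.erase a, (a - b) ^ k‖ = ∏ b ∈ T.erase a, ‖a - b‖ ^ k := by
        simp only [norm_prod, norm_pow]
    _ ≤ ∏ _b ∈ T.erase a, δ ^ k := by
        gcongr with b hb
        exact hT b (mem_of_mem_erase hb)
    _ = δ ^ (k * #(T.erase a)) := by rw [prod_const, pow_mul]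
    _ ≤ δ ^ (k * #T) := by
        gcongr
        exact erase_subset a T

/-- A Schwarz lemma: dividing `g` by `∏ (t - b) ^ k` and applying the maximum principle to the
quotient on a large disc shows that the first Taylor coefficient which may fail to vanish at a
zero is small. -/
theorem norm_iteratedDeriv_le_of_le_analyticOrderAt {g : ℂ → ℂ} (hg : Differentiable ℂ g)
    {T : Finset ℂ} {k : ℕ} {R B δ : ℝ} (hδ : 1 ≤ δ) (hR : 0 < R)
    (hTR : ∀ a ∈ T, ‖a‖ ≤ R / 2) (hTδ : ∀ a ∈ T, ∀ b ∈ T, ‖a - b‖ ≤ δ)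
    (hord : ∀ a ∈ T, (k : ℕ∞) ≤ analyticOrderAt g a)
    (hB : ∀ t : ℂ, ‖t‖ = R → ‖g t‖ ≤ B) {a : ℂ} (ha : a ∈ T) :
    ‖iteratedDeriv k g a‖ ≤ k.factorial * (2 * δ / R) ^ (k * #T) * B := by
  obtain ⟨h, hh, hgh⟩ := exists_differentiable_eq_prod_sub_pow_mul hg hord
  have hha : ‖h a‖ ≤ B / (R / 2) ^ (k * #T) :=
    norm_le_div_of_norm_prod_sub_pow_mul_le hh hR hTR
      (fun t ht => hgh t ▸ hB t ht) (by linarith [hTR a ha])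
  have hsplit : g = fun t => (t - a) ^ k * ((∏ b ∈ T.erase a, (t - b) ^ k) * h t) := by
    ext t
    rw [hgh t, ← mul_assoc, mul_prod_erase T (fun b => (t - b) ^ k) ha]
  rw [hsplit, iteratedDeriv_sub_pow_mul_self (by fun_prop) a k, norm_mul, norm_mul,
    Complex.norm_natCast, mul_assoc]
  refine mul_le_mul_of_nonneg_left ?_ (by positivity)
  calc ‖∏ b ∈ T.erase a, (a - b) ^ k‖ * ‖h a‖
      ≤ δ ^ (k * #T) * (B / (R / 2) ^ (k * #T)) := by
        gcongr
        exact norm_prod_erase_sub_pow_le hδ (hTδ a ha)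
    _ = (2 * δ / R) ^ (k * #T) * B := by
        rw [div_pow, div_pow, mul_pow]
        field_simp

end Schwarz

/-! ### Exponential sums -/

section ExpSum

theorem iteratedDeriv_sum_mul_exp {β : Type*} [Fintype β] (c b : β → ℂ) (k : ℕ) :
    iteratedDeriv k (fun t : ℂ => ∑ n, c n * Complex.exp (t * b n)) =
      fun t => ∑ n, c n * b n ^ k * Complex.exp (t * b n) := by
  induction k with
  | zero => simp
  | succ k ih =>
    ext t
    have hderiv : HasDerivAt (fun t : ℂ => ∑ n, c n * b n ^ k * Complex.exp (t * b n))
        (∑ n, c n * b n ^ k * (Complex.exp (t * b n) * (1 * b n))) t :=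
      HasDerivAt.fun_sum fun n _ => (((hasDerivAt_id t).mul_const (b n)).cexp).const_mul _
    rw [iteratedDeriv_succ, ih, hderiv.deriv]
    exact sum_congr rfl fun n _ => by ring

theorem norm_exp_mul_le {z w : ℂ} {R W : ℝ} (hz : ‖z‖ ≤ R) (hw : ‖w‖ ≤ W) :
    ‖Complex.exp (z * w)‖ ≤ Real.exp (R * W) := by
  refine (Complex.norm_exp_le_exp_norm _).trans (Real.exp_le_exp.2 ?_)
  rw [norm_mul]
  exact mul_le_mul hz hw (norm_nonneg _) ((norm_nonneg _).trans hz)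

theorem norm_sum_mul_pow_mul_exp_le {β : Type*} [Fintype β] {c b : β → ℂ} {k S : ℕ}
    {A R W : ℝ} (hR : 2 * (S : ℝ) ≤ R) (hc : ∀ n, ‖c n‖ ≤ A) (hb : ∀ n, ‖b n‖ ≤ W)
    (hzero : ∀ t < S, ∀ q < k, ∑ n, c n * b n ^ q * Complex.exp (t * b n) = 0)
    {t : ℕ} (ht : t < S) :
    ‖∑ n, c n * b n ^ k * Complex.exp (t * b n)‖ ≤
      k.factorial * (2 * S / R) ^ (k * S) * (Fintype.card β * (A * Real.exp (R * W))) := by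
  have hS : (1 : ℝ) ≤ S := by exact_mod_cast Nat.one_le_of_lt ht
  set g : ℂ → ℂ := fun t => ∑ n, c n * Complex.exp (t * b n) with hg_def
  have hg : Differentiable ℂ g := by fun_prop
  set T : Finset ℂ := (range S).image (Nat.cast : ℕ → ℂ)
  have hT_card : #T = S := by rw [card_image_of_injective _ Nat.cast_injective, card_range]
  have hT : ∀ a ∈ T, ∃ s : ℕ, s < S ∧ (s : ℂ) = a := by simp [T]
  have hT_norm : ∀ a ∈ T, ‖a‖ ≤ R / 2 := by
    intro a ha
    obtain ⟨s, hs, rfl⟩ := hT a ha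
    have : (s : ℝ) ≤ S := by exact_mod_cast hs.le
    rw [Complex.norm_natCast]
    linarith
  have hT_dist : ∀ a ∈ T, ∀ b ∈ T, ‖a - b‖ ≤ S := by
    intro a ha b hb
    obtain ⟨s, hs, rfl⟩ := hT a ha
    obtain ⟨s', hs', rfl⟩ := hT b hb
    have : |(s : ℤ) - s'| ≤ S := by rw [abs_le]; omega
    exact_mod_cast this
  have hord : ∀ a ∈ T, (k : ℕ∞) ≤ analyticOrderAt g a := by
    intro a ha
    obtain ⟨s, hs, rfl⟩ := hT a ha
    rw [natCast_le_analyticOrderAt_iff_iteratedDeriv_eq_zero (hg.analyticAt _)]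
    intro q hq
    rw [hg_def, iteratedDeriv_sum_mul_exp]
    exact hzero s hs q hq
  have hbound : ∀ z : ℂ, ‖z‖ = R → ‖g z‖ ≤ Fintype.card β * (A * Real.exp (R * W)) := by
    intro z hz
    refine (norm_sum_le_of_le univ fun n _ => (norm_mul_le _ _).trans
      (mul_le_mul (hc n) (norm_exp_mul_le hz.le (hb n)) (norm_nonneg _)
        ((norm_nonneg _).trans (hc n)))).trans ?_
    simp
  have hderiv := norm_iteratedDeriv_le_of_le_analyticOrderAt hg hS (by linarith) hT_norm hT_dist
    hord hbound (a := t) (by simpa [T] using ht)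
  rwa [hg_def, iteratedDeriv_sum_mul_exp, hT_card] at hderiv

theorem norm_map_list_prod_le_of_eq_sum_smul {𝕜 A E ι κ : Type*} [NormedField 𝕜] [CommRing A]
    [Algebra 𝕜 A] [SeminormedAddCommGroup E] [NormedSpace 𝕜 E] [Fintype ι] (Φ : A →ₗ[𝕜] E)
    {a : ι → A} {b : κ → A} {u : κ → ι → 𝕜} (hb : ∀ k, b k = ∑ i, u k i • a i) {C B : ℝ}
    (hC : ∀ k, ∑ i, ‖u k i‖ ≤ C) (hB : 0 ≤ B) {N : ℕ}
    (ha : ∀ l : List ι, l.length = N → ‖Φ (l.map a).prod‖ ≤ B) (l : List κ)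
    (hl : l.length = N) : ‖Φ (l.map b).prod‖ ≤ C ^ N * B := by
  have hmixed (l : List κ) (m : List ι) (hlm : l.length + m.length = N) :
      ‖Φ ((l.map b).prod * (m.map a).prod)‖ ≤ C ^ l.length * B := by
    induction l generalizing m with
    | nil => simpa using ha m (by simpa using hlm)
    | cons k l ih =>
      have hC0 : 0 ≤ C := (sum_nonneg fun i _ => norm_nonneg (u k i)).trans (hC k)
      have hexpand : ((k :: l).map b).prod * (m.map a).prod
          = ∑ i, u k i • ((l.map b).prod * ((i :: m).map a).prod) := by
        simp only [List.map_cons, List.prod_cons, hb k, sum_mul, smul_mul_assoc]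
        exact sum_congr rfl fun i _ => by rw [mul_assoc, mul_left_comm]
      rw [hexpand, map_sum, List.length_cons, pow_succ', mul_assoc]
      calc ‖∑ i, Φ (u k i • ((l.map b).prod * ((i :: m).map a).prod))‖
          ≤ ∑ i, ‖u k i‖ * (C ^ l.length * B) := by
            refine norm_sum_le_of_le _ fun i _ => ?_
            rw [map_smul, norm_smul]
            refine mul_le_mul_of_nonneg_left (ih (i :: m) ?_) (norm_nonneg _)
            rw [← hlm, List.length_cons, List.length_cons]
            omega
        _ = (∑ i, ‖u k i‖) * (C ^ l.length * B) := by rw [sum_mul]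
        _ ≤ C * (C ^ l.length * B) := mul_le_mul_of_nonneg_right (hC k) (by positivity)
  simpa [hl] using hmixed l [] (by simpa using hl)

theorem exists_length_le_card_mul_count {I : Type*} [Fintype I] [DecidableEq I] [Nonempty I]
    (l : List I) :
    ∃ j, l.length ≤ Fintype.card I * l.count j := by
  by_contra! h
  have hsum : ∑ j, l.count j = l.length := by
    simpa using Multiset.sum_count_eq_card (s := (univ : Finset I)) (m := (l : Multiset I))
      (by simp)
  have hlt : ∑ j : I, Fintype.card I * l.count j < ∑ _j : I, l.length :=
    sum_lt_sum_of_nonempty univ_nonempty fun j _ => h j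
  rw [← mul_sum, hsum] at hlt
  simp at hlt

theorem exists_prod_map_eq_pow_count_mul {I A : Type*} [DecidableEq I] [CommMonoid A] (a : I → A)
    (l : List I) (j : I) :
    ∃ m : List I, l.count j + m.length = l.length ∧
      (l.map a).prod = a j ^ l.count j * (m.map a).prod := by
  have hperm := List.filter_append_perm (fun i => i == j) l
  refine ⟨l.filter fun i => !(i == j), ?_, ?_⟩
  · simpa [List.filter_beq] using hperm.length_eq
  · rw [← (hperm.map a).prod_eq, List.map_append, List.prod_append, List.filter_beq,
      List.map_replicate, List.prod_replicate]

theorem norm_prod_map_apply_le {β I : Type*} {a : I → β → ℂ} {W : ℝ} (ha : ∀ i n, ‖a i n‖ ≤ W)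
    (l : List I) (n : β) : ‖(l.map a).prod n‖ ≤ W ^ l.length := by
  induction l with
  | nil => simp
  | cons i l ih =>
    simp only [List.map_cons, List.prod_cons, Pi.mul_apply, norm_mul, List.length_cons, pow_succ']
    exact mul_le_mul (ha i n) ih (norm_nonneg _) ((norm_nonneg _).trans (ha i n))

variable {β I : Type*} [Fintype β] [Fintype I]

/-- The value at the integral point `s` of the exponential sum with coefficients `p` and
frequencies `a`, as a linear form in an extra weight on the index set `β`. Taking that weight to be
a product of frequencies `a i` gives the partial derivatives of the exponential sum. -/
noncomputable def expSum (p : β → ℂ) (a : I → β → ℂ) (s : I → ℕ) : (β → ℂ) →ₗ[ℂ] ℂ :=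
  ∑ n, (p n * Complex.exp (∑ i, (s i : ℂ) * a i n)) • LinearMap.proj n

theorem expSum_apply (p : β → ℂ) (a : I → β → ℂ) (s : I → ℕ) (v : β → ℂ) :
    expSum p a s v = ∑ n, p n * v n * Complex.exp (∑ i, (s i : ℂ) * a i n) := by
  simp only [expSum, LinearMap.sum_apply, LinearMap.smul_apply, LinearMap.proj_apply, smul_eq_mul]
  exact sum_congr rfl fun n _ => by ring

theorem expSum_update_pow_mul [DecidableEq I] (p : β → ℂ) (a : I → β → ℂ) (s : I → ℕ) (j : I)
    (t q : ℕ) (v : β → ℂ) :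
    expSum p a (Function.update s j t) (a j ^ q * v) =
      ∑ n, p n * v n * Complex.exp (∑ i, (Function.update s j 0 i : ℂ) * a i n) * a j n ^ q *
        Complex.exp (t * a j n) := by
  have hupdate (t : ℕ) (n : β) : ∑ i, (Function.update s j t i : ℂ) * a i n =
      t * a j n + ∑ i ∈ univ.erase j, (s i : ℂ) * a i n := by
    rw [← add_sum_erase _ _ (mem_univ j), Function.update_self]
    refine congrArg _ (sum_congr rfl fun i hi => ?_)
    rw [Function.update_of_ne (ne_of_mem_erase hi)]
  rw [expSum_apply]
  refine sum_congr rfl fun n _ => ?_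
  rw [hupdate t, hupdate 0, Complex.exp_add, Nat.cast_zero, zero_mul, zero_add, Pi.mul_apply,
    Pi.pow_apply]
  ring

theorem norm_exp_sum_natCast_mul_le {a : I → ℂ} {W : ℝ} (ha : ∀ i, ‖a i‖ ≤ W) {s : I → ℕ}
    {S : ℕ} (hs : ∀ i, s i ≤ S) :
    ‖Complex.exp (∑ i, (s i : ℂ) * a i)‖ ≤ Real.exp (Fintype.card I * S * W) := by
  refine (Complex.norm_exp_le_exp_norm _).trans (Real.exp_le_exp.2 ?_)
  calc ‖∑ i, (s i : ℂ) * a i‖ ≤ ∑ _i : I, (S : ℝ) * W := by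
        refine norm_sum_le_of_le _ fun i _ => ?_
        rw [norm_mul, Complex.norm_natCast]
        exact mul_le_mul (by exact_mod_cast hs i) (ha i) (norm_nonneg _) (by positivity)
    _ = Fintype.card I * S * W := by simp [mul_assoc]

theorem norm_expSum_pow_mul_prod_le {p : β → ℂ} {a : I → β → ℂ} {S N k : ℕ} {A R W : ℝ}
    (hW : 1 ≤ W) (hR : 2 * (S : ℝ) ≤ R) (hp : ∀ n, ‖p n‖ ≤ A) (ha : ∀ i n, ‖a i n‖ ≤ W)
    (hzero : ∀ s : I → ℕ, (∀ i, s i < S) → ∀ l : List I, l.length < N →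
      expSum p a s (l.map a).prod = 0)
    {s : I → ℕ} (hs : ∀ i, s i < S) (j : I) {m : List I} (hm : k + m.length = N) :
    ‖expSum p a s (a j ^ k * (m.map a).prod)‖ ≤ k.factorial * (2 * S / R) ^ (k * S) *
      (Fintype.card β * (A * W ^ N * Real.exp (Fintype.card I * S * W) * Real.exp (R * W))) := by
  classical
  have hupdate {t : ℕ} (ht : t < S) (i : I) : Function.update s j t i < S := by
    rcases eq_or_ne i j with rfl | hij
    · simpa using ht
    · simpa [hij] using hs i
  have hcoeff (n : β) : ‖p n * (m.map a).prod n *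
      Complex.exp (∑ i, (Function.update s j 0 i : ℂ) * a i n)‖ ≤
        A * W ^ N * Real.exp (Fintype.card I * S * W) := by
    have hprod : ‖(m.map a).prod n‖ ≤ W ^ N :=
      (norm_prod_map_apply_le ha m n).trans (pow_le_pow_right₀ hW (by omega))
    have hexp := norm_exp_sum_natCast_mul_le (a := (a · n)) (fun i => ha i n)
      (fun i => (hupdate (Nat.zero_lt_of_lt (hs j)) i).le)
    have hA : 0 ≤ A := (norm_nonneg _).trans (hp n)
    rw [norm_mul, norm_mul]
    gcongr
    exact hp n
  have hline := norm_sum_mul_pow_mul_exp_le hR hcoeff (ha j) (k := k) (t := s j)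
    (fun t ht q hq => by
      rw [← expSum_update_pow_mul]
      simpa using hzero _ (hupdate ht) (List.replicate q j ++ m) (by simp; omega)) (hs j)
  rwa [← expSum_update_pow_mul, Function.update_eq_self] at hline

/-- Restrict to the line through `s` in the direction `j` occurring most often in `l`: there the
sum vanishes to order at least `N / card I` at `S` consecutive integers. -/
theorem norm_expSum_prod_le [Nonempty I] {p : β → ℂ} {a : I → β → ℂ} {S T N : ℕ} {A R W : ℝ}
    (hW : 1 ≤ W) (hA : 0 ≤ A) (hR : 2 * (S : ℝ) ≤ R) (hST : Fintype.card I * T ≤ S)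
    (hp : ∀ n, ‖p n‖ ≤ A) (ha : ∀ i n, ‖a i n‖ ≤ W)
    (hzero : ∀ s : I → ℕ, (∀ i, s i < S) → ∀ l : List I, l.length < N →
      expSum p a s (l.map a).prod = 0)
    {s : I → ℕ} (hs : ∀ i, s i < S) {l : List I} (hl : l.length = N) :
    ‖expSum p a s (l.map a).prod‖ ≤ N.factorial * (2 * S / R) ^ (N * T) *
      (Fintype.card β * (A * W ^ N * Real.exp (Fintype.card I * S * W) * Real.exp (R * W))) := by
  classical
  obtain ⟨j, hj⟩ := exists_length_le_card_mul_count l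
  obtain ⟨m, hlen, hprod⟩ := exists_prod_map_eq_pow_count_mul a l j
  set k := l.count j
  have hR0 : 0 < R := by
    have : (1 : ℝ) ≤ S := by exact_mod_cast Nat.one_le_of_lt (hs j)
    linarith
  have hexponent : N * T ≤ k * S := by nlinarith
  rw [hprod]
  refine (norm_expSum_pow_mul_prod_le hW hR hp ha hzero hs j (hlen.trans hl)).trans ?_
  gcongr ?_ * ?_ * _
  · exact_mod_cast Nat.factorial_le (by omega)
  · exact pow_le_pow_of_le_one (by positivity) ((div_le_one hR0).2 hR) hexponent

end ExpSum

/-! ### Houses, Siegel's lemma and dual bases in number fields -/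

section NumberField

open NumberField

theorem eq_zero_of_forall_sum_mul_pow_eq_zero {R β : Type*} [CommRing R] [IsDomain R] [Fintype β]
    {p v : β → R} (hv : Function.Injective v) (h : ∀ k : ℕ, ∑ n, p n * v n ^ k = 0) : p = 0 := by
  let e := Fintype.equivFin β
  have hfin : p ∘ e.symm = 0 := Matrix.eq_zero_of_forall_pow_sum_mul_pow_eq_zero
    (hv.comp e.symm.injective) fun k =>
      (e.symm.sum_comp fun n => p n * v n ^ (k : ℕ)).trans (h k)
  ext n
  simpa using congrFun hfin (e n)

theorem sum_aut_dualBasis_mul_aut_basis {F K I : Type*} [Field F] [Field K] [Algebra F K]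
    [FiniteDimensional F K] [IsGalois F K] [DecidableEq Gal(K/F)] [Fintype I] [DecidableEq I]
    (b : Module.Basis I F K) (g h : Gal(K/F)) :
    ∑ j, g ((Algebra.traceForm F K).dualBasis (traceForm_nondegenerate F K) b j) * h (b j) =
      if g = h then 1 else 0 := by
  let A : Matrix Gal(K/F) I K := fun g j =>
    g ((Algebra.traceForm F K).dualBasis (traceForm_nondegenerate F K) b j)
  let B : Matrix I Gal(K/F) K := fun j g => g (b j)
  have hcard : Fintype.card I = Fintype.card Gal(K/F) := by
    rw [← Module.finrank_eq_card_basis b, ← Nat.card_eq_fintype_card,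
      IsGalois.card_aut_eq_finrank]
  have hBA : B * A = 1 := by
    ext i j
    have hdual := LinearMap.BilinForm.apply_dualBasis_left
      (traceForm_nondegenerate F K) b j i
    rw [Algebra.traceForm_apply] at hdual
    have htrace := trace_eq_sum_automorphisms (K := F)
      ((Algebra.traceForm F K).dualBasis (traceForm_nondegenerate F K) b j * b i)
    rw [hdual] at htrace
    rw [Matrix.mul_apply, Matrix.one_apply]
    simp only [A, B, ← map_mul, mul_comm (b i)]
    rw [← htrace, apply_ite (algebraMap F K), map_one, map_zero]
  have hAB := congrFun₂ ((Matrix.mul_eq_one_comm_of_card_eq _ _ _ hcard).1 hBA) g h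
  rwa [Matrix.mul_apply, Matrix.one_apply] at hAB

theorem isIntegral_intCast_pow_mul_pow {K : Type*} [Field K] {D : ℤ} {x : K}
    (hx : IsIntegral ℤ ((D : K) * x)) {c N : ℕ} (hc : c ≤ N) :
    IsIntegral ℤ ((D : K) ^ N * x ^ c) := by
  rw [← Nat.sub_add_cancel hc, pow_add, mul_assoc, ← mul_pow]
  exact ((isIntegral_algebraMap (R := ℤ) (A := K) (x := D)).pow _).mul (hx.pow c)

variable {K : Type*} [Field K] [NumberField K]

theorem house_one_eq : house (1 : K) = 1 := by
  simpa using house_intCast (K := K) 1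

theorem house_list_prod_le {κ : Type*} {f : κ → K} {B : ℝ} (hf : ∀ g, house (f g) ≤ B)
    (l : List κ) : house (l.map f).prod ≤ B ^ l.length := by
  induction l with
  | nil => simp [house_one_eq]
  | cons g l ih =>
    simp only [List.map_cons, List.prod_cons, List.length_cons, pow_succ']
    exact (house_mul_le _ _).trans
      (mul_le_mul (hf g) ih (house_nonneg _) ((house_nonneg _).trans (hf g)))

theorem house_prod_le_pow_card {ι : Type*} {f : ι → K} {B : ℝ} (hf : ∀ i, house (f i) ≤ B)
    (s : Finset ι) : house (∏ i ∈ s, f i) ≤ B ^ #s := by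
  simpa [prod_map_toList] using house_list_prod_le hf s.toList

theorem eq_zero_of_isIntegral_of_norm_mul_house_pow_lt_one (φ : K →+* ℂ) {ξ : K}
    (hξ : IsIntegral ℤ ξ) (hlt : ‖φ ξ‖ * house ξ ^ (Module.finrank ℚ K - 1) < 1) : ξ = 0 := by
  obtain ⟨z, hz⟩ := IsIntegrallyClosed.isIntegral_iff.1 (Algebra.isIntegral_norm ℚ hξ)
  have hnorm : ‖z‖ < 1 := by
    rw [← Int.norm_cast_rat]
    simpa [← hz] using (norm_norm_le_norm_mul_house_pow ξ φ).trans_lt hlt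
  have hz0 : z = 0 := by
    rw [Int.norm_eq_abs] at hnorm
    exact Int.abs_lt_one_iff.1 (by exact_mod_cast hnorm)
  rw [hz0, map_zero] at hz
  exact Algebra.norm_eq_zero_iff.1 hz.symm

theorem house_intCast_pow_mul_pow_le {D : ℤ} {x : K} {H : ℝ} (hD : |(D : ℝ)| ≤ H)
    (hx : house ((D : K) * x) ≤ H) {c N : ℕ} (hc : c ≤ N) :
    house ((D : K) ^ N * x ^ c) ≤ H ^ N := by
  rw [← Nat.sub_add_cancel hc, pow_add, mul_assoc, ← mul_pow, pow_add]
  refine (house_mul_le _ _).trans (mul_le_mul ((house_pow_le _ _).trans ?_)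
    ((house_pow_le _ _).trans ?_) (house_nonneg _) ?_)
  · rw [house_intCast, Int.cast_abs]
    exact pow_le_pow_left₀ (abs_nonneg _) hD _
  · exact pow_le_pow_left₀ (house_nonneg _) hx _
  · exact pow_nonneg ((abs_nonneg _).trans hD) _

theorem exists_denominator_forall_house_prod_pow_le {J : Type*} [Fintype J] (e : J → K) :
    ∃ (D : ℤ) (H : ℝ), D ≠ 0 ∧ 1 ≤ H ∧ |(D : ℝ)| ≤ H ∧ ∀ (N : ℕ) (c : J → ℕ), (∀ j, c j ≤ N) →
      IsIntegral ℤ ((D : K) ^ N * ∏ j, e j ^ c j) ∧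
      house ((D : K) ^ N * ∏ j, e j ^ c j) ≤ H ^ N := by
  classical
  have : Algebra.IsAlgebraic ℤ K := (IsFractionRing.comap_isAlgebraic_iff (K := ℚ)).2 inferInstance
  obtain ⟨D, hD, hDe⟩ := Algebra.IsAlgebraic.exists_integral_multiples ℤ (univ.image e)
  have hint (j : J) : IsIntegral ℤ ((D : K) * e j) := by
    simpa using hDe (e j) (mem_image_of_mem e (mem_univ j))
  have hD1 : 1 ≤ |(D : ℝ)| := by exact_mod_cast Int.one_le_abs hD
  set H : ℝ := |(D : ℝ)| + ∑ j, house ((D : K) * e j)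
  have hsum : ∀ j, house ((D : K) * e j) ≤ ∑ j, house ((D : K) * e j) := fun j =>
    single_le_sum (f := fun j => house ((D : K) * e j)) (fun _ _ => house_nonneg _) (mem_univ j)
  have hDH : |(D : ℝ)| ≤ H := le_add_of_nonneg_right (sum_nonneg fun _ _ => house_nonneg _)
  have hH (j : J) : house ((D : K) * e j) ≤ H := by linarith [hsum j]
  have hfactor (N : ℕ) (c : J → ℕ) : ((D ^ Fintype.card J : ℤ) : K) ^ N * ∏ j, e j ^ c j =
      ∏ j, (D : K) ^ N * e j ^ c j := by
    rw [prod_mul_distrib, prod_const, card_univ]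
    push_cast
    ring
  refine ⟨D ^ Fintype.card J, H ^ Fintype.card J, pow_ne_zero _ hD, one_le_pow₀ (hD1.trans hDH),
    ?_, fun N c hc => ?_⟩
  · rw [Int.cast_pow, abs_pow]
    exact pow_le_pow_left₀ (abs_nonneg _) hDH _
  · rw [hfactor, pow_right_comm]
    exact ⟨IsIntegral.prod _ fun j _ => isIntegral_intCast_pow_mul_pow (hint j) (hc j),
      house_prod_le_pow_card (fun j => house_intCast_pow_mul_pow_le hDH (hH j) (hc j)) univ⟩

theorem mul_rpow_le_mul_of_le_one {c C x e : ℝ} (hcC : |c| ≤ C) (hx : 0 ≤ x)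
    (hCx : 1 ≤ C * x) (he0 : 0 ≤ e) (he1 : e ≤ 1) : c * (c * x) ^ e ≤ C * (C * x) := by
  have hC : 0 ≤ C := (abs_nonneg c).trans hcC
  calc c * (c * x) ^ e ≤ |c| * |(c * x) ^ e| := by
        rw [← abs_mul]
        exact le_abs_self _
    _ ≤ C * |c * x| ^ e := mul_le_mul hcC (Real.abs_rpow_le_abs_rpow _ _) (abs_nonneg _) hC
    _ ≤ C * (C * x) ^ e := by
        rw [abs_mul, abs_of_nonneg hx]
        gcongr
    _ ≤ C * (C * x) := by
        gcongr
        simpa using Real.rpow_le_rpow_of_exponent_le hCx he1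

theorem exists_forall_exists_mulVec_eq_zero_house_le.{u, v, w} (K : Type u) [Field K]
    [NumberField K] : ∃ C : ℝ, 1 ≤ C ∧
    ∀ {α : Type v} {β : Type w} [Fintype α] [Fintype β] (M : Matrix α β (𝓞 K)) {A : ℝ}, 1 ≤ A →
      (∀ k l, house (M k l : K) ≤ A) → 0 < Fintype.card α →
      2 * Fintype.card α ≤ Fintype.card β →
      ∃ ξ : β → 𝓞 K, ξ ≠ 0 ∧ M.mulVec ξ = 0 ∧
        ∀ l, house (ξ l : K) ≤ C * (C * (Fintype.card β * A)) := by
  classical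
  obtain ⟨c, hc⟩ : ∃ c : ℝ, ∀ {α : Type v} {β : Type w} [Fintype α] [Fintype β]
      (M : Matrix α β (𝓞 K)) {A : ℝ}, M ≠ 0 → (∀ k l, house (M k l : K) ≤ A) → 0 < Fintype.card α →
      Fintype.card α < Fintype.card β → ∃ ξ : β → 𝓞 K, ξ ≠ 0 ∧ M.mulVec ξ = 0 ∧
        ∀ l, house (ξ l : K) ≤ c * (c * (Fintype.card β : ℕ) * A) ^
          ((Fintype.card α : ℝ) / ((Fintype.card β : ℕ) - (Fintype.card α : ℕ))) :=
    ⟨_, fun M _ hM hA hα hαβ => house.exists_ne_zero_int_vec_house_le K M hM hα hαβ rfl hA rfl⟩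
  refine ⟨max 1 |c|, le_max_left _ _, fun {α β} _ _ M A hA hM hα hαβ => ?_⟩
  have hα' : (0 : ℝ) < Fintype.card α := by exact_mod_cast hα
  have hαβ' : 2 * (Fintype.card α : ℝ) ≤ Fintype.card β := by exact_mod_cast hαβ
  have hβ : (1 : ℝ) ≤ Fintype.card β := by exact_mod_cast (by omega : 1 ≤ Fintype.card β)
  have hbig : 1 ≤ max 1 |c| * (Fintype.card β * A) :=
    one_le_mul_of_one_le_of_one_le (le_max_left _ _) (one_le_mul_of_one_le_of_one_le hβ hA)
  rcases eq_or_ne M 0 with rfl | hM0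
  · have : Nonempty β := Fintype.card_pos_iff.1 (by omega)
    refine ⟨1, one_ne_zero, by simp, fun l => ?_⟩
    simpa [house_one_eq] using one_le_mul_of_one_le_of_one_le (le_max_left 1 |c|) hbig
  · obtain ⟨ξ, hξ0, hξ, hbound⟩ := hc M hM0 hM hα (by omega)
    refine ⟨ξ, hξ0, hξ, fun l => (hbound l).trans ?_⟩
    rw [mul_assoc c]
    exact mul_rpow_le_mul_of_le_one (le_max_right _ _) (by positivity) hbig
      (div_nonneg hα'.le (by linarith)) (div_le_one_of_le₀ (by linarith) (by linarith))

end NumberField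

/-! ### Choice of parameters -/

section Parameters

theorem mul_mul_pow_pred_le_pow {c d μ : ℕ} (hd : 1 ≤ d) (hμ : c ≤ μ) :
    c * μ ^ (d - 1) ≤ μ ^ d :=
  (Nat.mul_le_mul_right _ hμ).trans_eq (mul_pow_sub_one (by lia) μ)

theorem two_mul_pow_mul_pow_le_pow {d : ℕ} (hd : 1 ≤ d) (S μ : ℕ) :
    2 * (S ^ d * (μ ^ d) ^ (d - 1)) ≤ (2 * S * μ ^ (d - 1)) ^ d :=
  calc 2 * (S ^ d * (μ ^ d) ^ (d - 1)) ≤ 2 ^ d * (S ^ d * (μ ^ d) ^ (d - 1)) := by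
        gcongr
        exact Nat.le_self_pow (by lia) 2
    _ = (2 * S * μ ^ (d - 1)) ^ d := by
        rw [mul_pow, mul_pow, ← pow_mul, ← pow_mul, mul_comm d, mul_assoc]

theorem pow_two_mul_mul_le_pow_two_mul {c d μ N : ℕ} (hd : 1 ≤ d) (hμ : c ^ 2 ≤ μ)
    (hN : μ ^ d ≤ N) : (c * μ ^ (d - 1)) ^ (2 * d) * N ≤ N ^ (2 * d) := by
  have hexp : d + (d - 1) * (2 * d) = d * (2 * d - 1) := by
    obtain ⟨e, rfl⟩ : ∃ e, d = e + 1 := ⟨d - 1, by lia⟩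
    rw [show 2 * (e + 1) - 1 = 2 * e + 1 by lia, Nat.add_sub_cancel]
    ring
  calc (c * μ ^ (d - 1)) ^ (2 * d) * N
      = (c ^ 2) ^ d * (μ ^ (d - 1)) ^ (2 * d) * N := by rw [mul_pow, pow_mul c]
    _ ≤ μ ^ d * (μ ^ (d - 1)) ^ (2 * d) * N := by gcongr
    _ = (μ ^ d) ^ (2 * d - 1) * N := by rw [← pow_mul, ← pow_mul, ← pow_add, hexp]
    _ ≤ N ^ (2 * d - 1) * N := by gcongr
    _ = N ^ (2 * d) := pow_sub_one_mul (by lia) N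

theorem div_pow_mul_self_pow_le_one {x d S N : ℕ} (hx : x ^ (2 * d) * N ≤ N ^ (2 * d)) :
    ((x : ℝ) / N) ^ (N * (2 * d * S)) * ((N : ℝ) ^ N) ^ S ≤ 1 := by
  have hratio : ((x : ℝ) / N) ^ (2 * d) * N ≤ 1 := by
    rw [div_pow, div_mul_eq_mul_div]
    exact div_le_one_of_le₀ (mod_cast hx) (by positivity)
  calc ((x : ℝ) / N) ^ (N * (2 * d * S)) * ((N : ℝ) ^ N) ^ S
      = (((x : ℝ) / N) ^ (2 * d) * N) ^ (N * S) := by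
        rw [mul_pow, ← pow_mul, ← pow_mul]
        ring_nf
    _ ≤ 1 := pow_le_one₀ (by positivity) hratio

theorem mul_pow_le_self_pow_sq {C : ℝ} {L N : ℕ} (hC₀ : 0 ≤ C) (hC : C ≤ N) (hL : L ≤ N) :
    (C * L) ^ N ≤ ((N : ℝ) ^ N) ^ 2 := by
  calc (C * L) ^ N ≤ ((N : ℝ) * N) ^ N := by gcongr
    _ = ((N : ℝ) ^ N) ^ 2 := by rw [mul_pow, sq]

theorem exp_mul_exp_le_self_pow_sq {C : ℝ} {d L S N : ℕ} (hd : 1 ≤ d) (hL : 0 < L) (hC₀ : 0 ≤ C)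
    (hC : Real.exp (d * C) ≤ N) (hSL : S * L ≤ N) :
    Real.exp (d * S * (C * L)) * Real.exp (N / L * (C * L)) ≤ ((N : ℝ) ^ N) ^ 2 := by
  have hSL' : (S : ℝ) * L ≤ N := mod_cast hSL
  have hd' : (1 : ℝ) ≤ d := mod_cast hd
  have hexp : Real.exp (N * (d * C)) ≤ (N : ℝ) ^ N := by
    rw [Real.exp_nat_mul]
    gcongr
  have hleft : (d : ℝ) * S * (C * L) ≤ N * (d * C) := by
    calc (d : ℝ) * S * (C * L) = (S * L) * (d * C) := by ring
      _ ≤ N * (d * C) := by gcongr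
  have hright : (N : ℝ) / L * (C * L) ≤ N * (d * C) := by
    calc (N : ℝ) / L * (C * L) = N * (1 * C) := by field_simp
      _ ≤ N * (d * C) := by gcongr
  calc _ ≤ Real.exp (N * (d * C)) * Real.exp (N * (d * C)) := by gcongr
    _ ≤ (N : ℝ) ^ N * (N : ℝ) ^ N := by gcongr
    _ = ((N : ℝ) ^ N) ^ 2 := (sq _).symm

theorem mul_mul_pow_lt_one_of_le_pow {Q ρ E C F B A V X : ℝ} {d : ℕ} (hd : 1 ≤ d) (hQ : 1 < Q)
    (hρ : 0 < ρ) (hE₀ : 0 ≤ E) (hC₀ : 0 ≤ C) (hF₀ : 0 ≤ F) (hB₀ : 0 ≤ B) (hA₀ : 0 ≤ A)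
    (hV₀ : 0 ≤ V) (hX₀ : 0 ≤ X) (hE : E ≤ Q) (hC : C ≤ Q) (hF : F ≤ Q) (hB : B ≤ Q)
    (hA : A ≤ Q ^ (2 * d + 4)) (hV : V ≤ Q ^ 2) (hX : X ≤ Q ^ 2)
    (hsmall : ρ * Q ^ (d * (2 * d + 12) + 1) ≤ 1) :
    E * (C * (F * ρ * (B * (A * V * X)))) * (B * (A * V * E)) ^ (d - 1) < 1 := by
  have : 0 < Q := one_pos.trans hQ
  have hfirst : E * (C * (F * ρ * (B * (A * V * X)))) ≤ ρ * Q ^ (2 * d + 12) :=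
    calc _ ≤ Q * (Q * (Q * ρ * (Q * (Q ^ (2 * d + 4) * Q ^ 2 * Q ^ 2)))) := by gcongr
      _ = ρ * Q ^ (2 * d + 12) := by ring
  have hsecond : B * (A * V * E) ≤ Q ^ (2 * d + 8) :=
    calc _ ≤ Q * (Q ^ (2 * d + 4) * Q ^ 2 * Q) := by gcongr
      _ = Q ^ (2 * d + 8) := by ring
  have hdegree : 2 * d + 12 + (2 * d + 8) * (d - 1) < d * (2 * d + 12) + 1 := by
    obtain ⟨e, rfl⟩ : ∃ e, d = e + 1 := ⟨d - 1, by lia⟩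
    rw [Nat.add_sub_cancel]
    nlinarith
  calc _ ≤ ρ * Q ^ (2 * d + 12) * (Q ^ (2 * d + 8)) ^ (d - 1) := by gcongr
    _ = ρ * Q ^ (2 * d + 12 + (2 * d + 8) * (d - 1)) := by
        rw [← pow_mul, mul_assoc, ← pow_add]
    _ < ρ * Q ^ (d * (2 * d + 12) + 1) := by gcongr
    _ ≤ 1 := hsmall

/-- The upper bound for the product of the absolute value of a nonzero algebraic integer of degree
`d` with the `d - 1`st power of its house, as it comes out of the extrapolation from order `N - 1`
to order `N`. It has to be below `1`. -/
noncomputable def extrapolationBound (d S T L : ℕ) (Cs H C₁ C₂ : ℝ) (M N : ℕ) : ℝ :=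
  let W := C₁ * L
  let E := H ^ (S * L)
  let A := Cs * (Cs * (L ^ d * (E * W ^ ((d - 1) * M))))
  E * (C₂ ^ N * (N.factorial * (2 * S / (N / L)) ^ (N * T) *
    (L ^ d * (A * W ^ N * (Real.exp (d * S * W) * Real.exp (N / L * W)))))) *
      (L ^ d * (A * W ^ N * E)) ^ (d - 1)

theorem extrapolationBound_lt_one {d S T L M N : ℕ} {Cs H C₁ C₂ : ℝ} (hd : 1 ≤ d) (hS : 0 < S)
    (hL : 0 < L) (hN : 2 ≤ N) (hdN : d ≤ N) (hLN : L ≤ N) (hSL : S * L ≤ N) (hMN : M ≤ N)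
    (hCs : 0 ≤ Cs) (hH : 1 ≤ H) (hC₁ : 1 ≤ C₁) (hC₂ : 0 ≤ C₂) (hCsN : Cs ≤ N) (hHN : H ≤ N)
    (hC₁N : C₁ ≤ N) (hC₂N : C₂ ≤ N) (hexp : Real.exp (d * C₁) ≤ N)
    (hsmall : (2 * S / ((N : ℝ) / L)) ^ (N * T) * ((N : ℝ) ^ N) ^ (d * (2 * d + 12) + 1) ≤ 1) :
    extrapolationBound d S T L Cs H C₁ C₂ M N < 1 := by
  have hN₁ : (1 : ℝ) < N := mod_cast hN
  have hL₁ : (1 : ℝ) ≤ L := mod_cast hL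
  have hLN' : (L : ℝ) ≤ N := mod_cast hLN
  have : (0 : ℝ) < S := mod_cast hS
  have hW : 1 ≤ C₁ * L := one_le_mul_of_one_le_of_one_le hC₁ hL₁
  set Q : ℝ := (N : ℝ) ^ N with hQ
  have hQ₁ : 1 < Q := one_lt_pow₀ hN₁ (by lia)
  have hE : H ^ (S * L) ≤ Q := (pow_le_pow_right₀ hH hSL).trans (by rw [hQ]; gcongr)
  have hB : (L : ℝ) ^ d ≤ Q := (pow_le_pow_left₀ (by positivity) hLN' d).trans
    (pow_le_pow_right₀ hN₁.le hdN)
  have hV : (C₁ * L) ^ N ≤ Q ^ 2 := mul_pow_le_self_pow_sq (by positivity) hC₁N hLN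
  have hVd : (C₁ * L) ^ ((d - 1) * M) ≤ Q ^ (2 * d) :=
    calc (C₁ * L) ^ ((d - 1) * M) ≤ (C₁ * L) ^ (N * d) :=
          pow_le_pow_right₀ hW (by rw [mul_comm]; exact Nat.mul_le_mul hMN (Nat.sub_le d 1))
      _ = ((C₁ * L) ^ N) ^ d := pow_mul ..
      _ ≤ (Q ^ 2) ^ d := by gcongr
      _ = Q ^ (2 * d) := (pow_mul ..).symm
  have hCsQ : Cs ≤ Q := hCsN.trans (le_self_pow₀ hN₁.le (by lia))
  have hA : Cs * (Cs * (L ^ d * (H ^ (S * L) * (C₁ * L) ^ ((d - 1) * M)))) ≤ Q ^ (2 * d + 4) :=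
    calc _ ≤ Q * (Q * (Q * (Q * Q ^ (2 * d)))) := by gcongr
      _ = Q ^ (2 * d + 4) := by ring
  exact mul_mul_pow_lt_one_of_le_pow hd hQ₁ (by positivity) (by positivity) (by positivity)
    (by positivity) (by positivity) (by positivity) (by positivity) (by positivity) hE
    (by rw [hQ]; gcongr) (hQ ▸ mod_cast Nat.factorial_le_pow N) hB hA hV
    (exp_mul_exp_le_self_pow_sq hd hL (by positivity) hexp hSL) hsmall

/-- Siegel's lemma needs `L ^ d` to exceed about `S ^ d * M ^ (d - 1)`, while the analytic estimate
gains a factor `N ^ N` only if `L` is smaller than `M` by a power of `M`; hence `M = μ ^ d` and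
`L ≈ μ ^ (d - 1)` for large `μ`. -/
theorem exists_extrapolationBound_lt_one {d : ℕ} (hd : 1 ≤ d) {Cs H C₁ C₂ : ℝ} (hCs : 0 ≤ Cs)
    (hH : 1 ≤ H) (hC₁ : 1 ≤ C₁) (hC₂ : 0 ≤ C₂) :
    ∃ S T L M : ℕ, 0 < S ∧ 0 < L ∧ 0 < M ∧ d * T ≤ S ∧ 2 * (S ^ d * M ^ (d - 1)) ≤ L ^ d ∧
      ∀ N, M ≤ N → 2 * (S : ℝ) ≤ N / L ∧ extrapolationBound d S T L Cs H C₁ C₂ M N < 1 := by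
  set k := d * (2 * d + 12) + 1
  set S := d * (2 * d * k)
  have hS₀ : 0 < S := by positivity
  obtain ⟨μ₀, hμ₀⟩ := exists_nat_ge (Cs + H + C₁ + C₂ + Real.exp (d * C₁))
  set μ := μ₀ + (4 * S ^ 2) ^ 2 + d + 2 with hμ
  set L := 2 * S * μ ^ (d - 1) with hL
  have hL₀ : 0 < L := by positivity
  refine ⟨S, 2 * d * k, L, μ ^ d, hS₀, hL₀, by positivity, le_rfl,
    two_mul_pow_mul_pow_le_pow hd S μ, fun N hN => ?_⟩
  have hμN : μ ≤ N := (Nat.le_self_pow (by lia) μ).trans hN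
  have hμ₀N : (μ₀ : ℝ) ≤ N := mod_cast show μ₀ ≤ N by lia
  have hprod : 2 * S * L = 4 * S ^ 2 * μ ^ (d - 1) := by rw [hL]; ring
  have hSLN : 2 * S * L ≤ N := by
    have hSμ : 4 * S ^ 2 ≤ μ := (Nat.le_self_pow two_ne_zero (4 * S ^ 2)).trans (by lia)
    exact hprod ▸ (mul_mul_pow_pred_le_pow hd hSμ).trans hN
  have hratio : 2 * (S : ℝ) / (N / L) = (2 * S * L : ℕ) / N := by
    push_cast
    field_simp
  have hexp := Real.exp_pos (d * C₁)
  refine ⟨?_, extrapolationBound_lt_one hd hS₀ hL₀ (by lia) (by lia) (by nlinarith)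
    (by nlinarith) hN hCs hH hC₁ hC₂ (by linarith) (by linarith) (by linarith) (by linarith)
    (by linarith) ?_⟩
  · rw [le_div_iff₀ (mod_cast hL₀)]
    exact_mod_cast hSLN
  · rw [hratio, hprod]
    exact div_pow_mul_self_pow_le_one (pow_two_mul_mul_le_pow_two_mul hd (by lia) hN)

end Parameters

/-! ### Auxiliary functions with algebraic values -/

section ArithExpSystem

open NumberField

theorem list_map_prod_eq_prod_pow_count {κ R : Type*} [Fintype κ] [DecidableEq κ] [CommMonoid R]
    (f : κ → R) (l : List κ) : (l.map f).prod = ∏ g, f g ^ l.count g := by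
  rw [Finset.prod_list_map_count]
  refine prod_subset (subset_univ _) fun g _ hg => ?_
  rw [List.count_eq_zero_of_not_mem (by simpa using hg), pow_zero]

/-- A family of frequency vectors `freq i : β → ℂ`, spanning the same space as the image under `φ`
of a family of vectors `dir g` of algebraic integers, such that for all exponents `s i < S` the
numbers `exp (∑ i, s i * freq i n)` are, up to the common denominator `denom`, images under `φ` of
algebraic integers `val s n`. The real parameters bound all sizes: `W` those of `dir` and `freq`,
`E` those of `val` and `denom`, and `C` the coefficients expressing `dir` through `freq`. -/
structure ArithExpSystem {K : Type*} [Field K] [NumberField K] (φ : K →+* ℂ) (β I κ : Type*)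
    [Fintype I] [Fintype κ] (S : ℕ) (W E C : ℝ) where
  dir : κ → β → K
  freq : I → β → ℂ
  val : (I → ℕ) → β → K
  denom : ℂ
  freqCoeff : I → κ → ℂ
  dirCoeff : κ → I → ℂ
  one_le_dirBound : 1 ≤ W
  one_le_valBound : 1 ≤ E
  isIntegral_dir : ∀ g n, IsIntegral ℤ (dir g n)
  house_dir_le : ∀ g n, house (dir g n) ≤ W
  norm_freq_le : ∀ i n, ‖freq i n‖ ≤ W
  isIntegral_val : ∀ {s}, (∀ i, s i < S) → ∀ n, IsIntegral ℤ (val s n)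
  house_val_le : ∀ {s}, (∀ i, s i < S) → ∀ n, house (val s n) ≤ E
  map_val : ∀ s n, φ (val s n) = denom * Complex.exp (∑ i, (s i : ℂ) * freq i n)
  denom_ne_zero : denom ≠ 0
  norm_denom_le : ‖denom‖ ≤ E
  freq_eq_sum : ∀ i, freq i = ∑ g, freqCoeff i g • fun n => φ (dir g n)
  map_dir_eq_sum : ∀ g, (fun n => φ (dir g n)) = ∑ i, dirCoeff g i • freq i
  sum_norm_dirCoeff_le : ∀ g, ∑ i, ‖dirCoeff g i‖ ≤ C

namespace ArithExpSystem

variable {K : Type*} [Field K] [NumberField K] {φ : K →+* ℂ} {β I κ : Type*}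
  [Fintype I] [Fintype κ] {S : ℕ} {W E C : ℝ} (Y : ArithExpSystem φ β I κ S W E C)

theorem isIntegral_prod_dir_pow_mul_val {s : I → ℕ} {e : κ → ℕ} (hs : ∀ i, s i < S) (n : β) :
    IsIntegral ℤ ((∏ g, Y.dir g n ^ e g) * Y.val s n) :=
  (IsIntegral.prod _ fun g _ => (Y.isIntegral_dir g n).pow _).mul (Y.isIntegral_val hs n)

theorem house_prod_dir_pow_mul_val_le {s : I → ℕ} {e : κ → ℕ} {k M : ℕ} (hk : Fintype.card κ ≤ k)
    (he : ∀ g, e g ≤ M) (hs : ∀ i, s i < S) (n : β) :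
    house ((∏ g, Y.dir g n ^ e g) * Y.val s n) ≤ E * W ^ (k * M) := by
  have hprod : house (∏ g, Y.dir g n ^ e g) ≤ W ^ (k * M) :=
    calc house (∏ g, Y.dir g n ^ e g) ≤ (W ^ M) ^ Fintype.card κ :=
          house_prod_le_pow_card (fun g => (house_pow_le _ _).trans <|
            (pow_le_pow_left₀ (house_nonneg _) (Y.house_dir_le g n) _).trans
              (pow_le_pow_right₀ Y.one_le_dirBound (he g))) univ
      _ = W ^ (Fintype.card κ * M) := by rw [← pow_mul, mul_comm]
      _ ≤ W ^ (k * M) := pow_le_pow_right₀ Y.one_le_dirBound (Nat.mul_le_mul_right M hk)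
  rw [mul_comm]
  exact (house_mul_le _ _).trans (mul_le_mul (Y.house_val_le hs n) hprod (house_nonneg _)
    (zero_le_one.trans Y.one_le_valBound))

variable [Fintype β]

/-- The value at the integer point `s` of the iterated derivative, in the directions listed in `l`,
of the exponential polynomial with coefficients `p` and frequencies `Y.freq`, multiplied by
`Y.denom` and pulled back to `K`. -/
def auxSum (p : β → K) (s : I → ℕ) (l : List κ) : K :=
  ∑ n, p n * (l.map fun g => Y.dir g n).prod * Y.val s n

variable {p : β → K} {s : I → ℕ} {l : List κ}

theorem map_auxSum (p : β → K) (s : I → ℕ) (l : List κ) :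
    φ (Y.auxSum p s l) = Y.denom *
      expSum (fun n => φ (p n)) Y.freq s (l.map fun g n => φ (Y.dir g n)).prod := by
  rw [auxSum, expSum_apply, map_sum, mul_sum]
  refine sum_congr rfl fun n _ => ?_
  rw [map_mul, map_mul, Y.map_val, map_list_prod, List.map_map, Pi.list_prod_apply, List.map_map]
  simp only [Function.comp_def]
  ring

theorem auxSum_eq_zero_iff : Y.auxSum p s l = 0 ↔
    expSum (fun n => φ (p n)) Y.freq s (l.map fun g n => φ (Y.dir g n)).prod = 0 := by
  rw [← map_eq_zero φ, map_auxSum, mul_eq_zero, or_iff_right Y.denom_ne_zero]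

theorem isIntegral_auxSum (hp : ∀ n, IsIntegral ℤ (p n)) (hs : ∀ i, s i < S) (l : List κ) :
    IsIntegral ℤ (Y.auxSum p s l) := by
  refine IsIntegral.sum _ fun n _ => ((hp n).mul ((integralClosure ℤ K).list_prod_mem ?_)).mul
    (Y.isIntegral_val hs n)
  simpa [mem_integralClosure_iff] using fun g _ => Y.isIntegral_dir g n

theorem house_auxSum_le {A : ℝ} (hA : 0 ≤ A) (hp : ∀ n, house (p n) ≤ A) (hs : ∀ i, s i < S)
    (l : List κ) :
    house (Y.auxSum p s l) ≤ Fintype.card β * (A * W ^ l.length * E) := by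
  have hW : 0 ≤ W := zero_le_one.trans Y.one_le_dirBound
  have hterm (n : β) :
      house (p n * (l.map fun g => Y.dir g n).prod * Y.val s n) ≤ A * W ^ l.length * E :=
    (house_mul_le _ _).trans <| mul_le_mul
      ((house_mul_le _ _).trans <| mul_le_mul (hp n)
        (house_list_prod_le (fun g => Y.house_dir_le g n) l) (house_nonneg _) hA)
      (Y.house_val_le hs n) (house_nonneg _) (by positivity)
  calc house (Y.auxSum p s l) ≤ ∑ _n : β, A * W ^ l.length * E :=
        (house_sum_le_sum_house _ _).trans (sum_le_sum fun n _ => hterm n)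
    _ = Fintype.card β * (A * W ^ l.length * E) := by
        rw [sum_const, card_univ, nsmul_eq_mul]

theorem expSum_freq_prod_eq_zero {N : ℕ} (h : ∀ l : List κ, l.length = N → Y.auxSum p s l = 0)
    {l : List I} (hl : l.length = N) :
    expSum (fun n => φ (p n)) Y.freq s (l.map Y.freq).prod = 0 := by
  have hbound := norm_map_list_prod_le_of_eq_sum_smul (expSum (fun n => φ (p n)) Y.freq s)
    Y.freq_eq_sum (C := ∑ i, ∑ g, ‖Y.freqCoeff i g‖)
    (fun i => single_le_sum (f := fun i => ∑ g, ‖Y.freqCoeff i g‖)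
      (fun _ _ => by positivity) (mem_univ i)) le_rfl
    (fun l' hl' => (norm_eq_zero.2 (Y.auxSum_eq_zero_iff.1 (h l' hl'))).le) l hl
  rwa [mul_zero, norm_le_zero_iff] at hbound

theorem auxSum_eq_zero_of_forall_length_lt [Nonempty I] {T N : ℕ} {A R : ℝ} (hA : 0 ≤ A)
    (hR : 2 * (S : ℝ) ≤ R) (hST : Fintype.card I * T ≤ S) (hpint : ∀ n, IsIntegral ℤ (p n))
    (hp : ∀ n, house (p n) ≤ A)
    (hzero : ∀ s, (∀ i, s i < S) → ∀ l : List κ, l.length < N → Y.auxSum p s l = 0)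
    (hlt : E * (C ^ N * (N.factorial * (2 * S / R) ^ (N * T) * (Fintype.card β *
      (A * W ^ N * (Real.exp (Fintype.card I * S * W) * Real.exp (R * W)))))) *
        (Fintype.card β * (A * W ^ N * E)) ^ (Module.finrank ℚ K - 1) < 1)
    (hs : ∀ i, s i < S) (hl : l.length = N) : Y.auxSum p s l = 0 := by
  have hR₀ : 0 ≤ R := (by positivity : (0 : ℝ) ≤ 2 * S).trans hR
  have hW : 0 ≤ W := zero_le_one.trans Y.one_le_dirBound
  have hE : 0 ≤ E := zero_le_one.trans Y.one_le_valBound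
  have hfreq (l : List I) (hl : l.length = N) :=
    norm_expSum_prod_le (p := fun n => φ (p n)) Y.one_le_dirBound hA hR hST
      (fun n => (norm_embedding_le_house (p n) φ).trans (hp n)) Y.norm_freq_le
      (fun s hs l hl => Y.expSum_freq_prod_eq_zero (fun l' hl' => hzero s hs l' (hl' ▸ hl)) rfl)
      hs hl
  have hdir := norm_map_list_prod_le_of_eq_sum_smul (expSum (fun n => φ (p n)) Y.freq s)
    Y.map_dir_eq_sum Y.sum_norm_dirCoeff_le (by positivity) hfreq l hl
  have hnorm : ‖φ (Y.auxSum p s l)‖ ≤ E * (C ^ N * (N.factorial * (2 * S / R) ^ (N * T) *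
      (Fintype.card β *
        (A * W ^ N * (Real.exp (Fintype.card I * S * W) * Real.exp (R * W)))))) := by
    rw [map_auxSum, norm_mul, ← mul_assoc (A * W ^ N)]
    exact mul_le_mul Y.norm_denom_le hdir (norm_nonneg _) hE
  refine eq_zero_of_isIntegral_of_norm_mul_house_pow_lt_one φ (Y.isIntegral_auxSum hpint hs l)
    (lt_of_le_of_lt ?_ hlt)
  exact mul_le_mul hnorm (pow_le_pow_left₀ (house_nonneg _)
    (hl ▸ Y.house_auxSum_le hA hp hs l) _) (pow_nonneg (house_nonneg _) _)
    ((norm_nonneg _).trans hnorm)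

theorem eq_zero_of_forall_auxSum_eq_zero (hS : 0 < S) {g : κ}
    (hg : Function.Injective (Y.dir g))
    (h : ∀ s, (∀ i, s i < S) → ∀ l : List κ, Y.auxSum p s l = 0) : p = 0 := by
  have hφp : (fun n => φ (p n)) = 0 :=
    eq_zero_of_forall_sum_mul_pow_eq_zero (v := fun n => φ (Y.dir g n))
      (φ.injective.comp hg) fun k => by
        have hk := Y.auxSum_eq_zero_iff.1 (h 0 (fun _ => hS) (List.replicate k g))
        simpa [expSum_apply] using hk
  exact funext fun n => (map_eq_zero φ).1 (congrFun hφp n)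

theorem exists_forall_exists_auxSum_eq_zero.{u, v, w, x} (K : Type u) [Field K] [NumberField K] :
    ∃ Cs : ℝ, 1 ≤ Cs ∧ ∀ {φ : K →+* ℂ} {β : Type v} {I : Type w} {κ : Type x} [Fintype β]
      [Fintype I] [Fintype κ] {S : ℕ} {W E C : ℝ} (Y : ArithExpSystem φ β I κ S W E C) {k M : ℕ},
      0 < S → 0 < M → Fintype.card κ ≤ k → 2 * (S ^ Fintype.card I * M ^ k) ≤ Fintype.card β →
      ∃ p : β → 𝓞 K, p ≠ 0 ∧
        (∀ n, house (p n : K) ≤ Cs * (Cs * (Fintype.card β * (E * W ^ (k * M))))) ∧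
        ∀ s, (∀ i, s i < S) → ∀ l : List κ, l.length < M →
          Y.auxSum (fun n => (p n : K)) s l = 0 := by
  classical
  obtain ⟨Cs, hCs, hsiegel⟩ := exists_forall_exists_mulVec_eq_zero_house_le K
  refine ⟨Cs, hCs, fun {φ β I κ} _ _ _ {S W E C} Y {k M} hS hM hk hcard => ?_⟩
  let a : Matrix ((I → Fin S) × (κ → Fin M)) β (𝓞 K) := fun t n =>
    ⟨(∏ g, Y.dir g n ^ (t.2 g : ℕ)) * Y.val (fun i => t.1 i) n,
      Y.isIntegral_prod_dir_pow_mul_val (fun i => (t.1 i).2) n⟩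
  have hrows : Fintype.card ((I → Fin S) × (κ → Fin M)) ≤ S ^ Fintype.card I * M ^ k := by
    simp only [Fintype.card_prod, Fintype.card_fun, Fintype.card_fin]
    gcongr
  have hrows₀ : 0 < Fintype.card ((I → Fin S) × (κ → Fin M)) := by
    simp only [Fintype.card_prod, Fintype.card_fun, Fintype.card_fin]
    positivity
  obtain ⟨p, hp₀, hpker, hp⟩ := hsiegel a
    (one_le_mul_of_one_le_of_one_le Y.one_le_valBound (one_le_pow₀ Y.one_le_dirBound))
    (fun t n => Y.house_prod_dir_pow_mul_val_le hk (fun g => (t.2 g).2.le)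
      (fun i => (t.1 i).2) n) hrows₀ ((Nat.mul_le_mul_left 2 hrows).trans hcard)
  refine ⟨p, hp₀, hp, fun s hs l hl => ?_⟩
  have hcount (g : κ) : l.count g < M := List.count_le_length.trans_lt hl
  have hrow := congrArg (algebraMap (𝓞 K) K)
    (congrFun hpker (fun i => ⟨s i, hs i⟩, fun g => ⟨l.count g, hcount g⟩))
  simp only [Matrix.mulVec, dotProduct, map_sum, Pi.zero_apply, map_zero] at hrow
  rw [auxSum, ← hrow]
  refine sum_congr rfl fun n _ => ?_
  rw [list_map_prod_eq_prod_pow_count, map_mul, mul_comm _ (algebraMap (𝓞 K) K (p n)), mul_assoc]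
  rfl

end ArithExpSystem

end ArithExpSystem

/-! ### Linear forms in conjugates with algebraic exponentials -/

section ConjForm

open NumberField

variable {K : Type*} [Field K] [NumberField K] (φ : K →+* ℂ) (Λ : Gal(K/ℚ) → ℂ)

/-- The complex linear form `x ↦ ∑ g, Λ g * φ (g x)` in the conjugates of `x`. -/
noncomputable def conjForm : K →+ ℂ where
  toFun x := ∑ g, Λ g * φ (g x)
  map_zero' := by simp
  map_add' x y := by simp [mul_add, sum_add_distrib]

theorem conjForm_apply (x : K) : conjForm φ Λ x = ∑ g, Λ g * φ (g x) := rfl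

theorem conjForm_mul_eq_sum_support (x y : K) :
    conjForm φ Λ (x * y) = ∑ g : {g // Λ g ≠ 0}, Λ g * φ (g.1 x) * φ (g.1 y) := by
  rw [← Finset.sum_subtype (univ.filter fun g => Λ g ≠ 0) (by simp)
    (fun g => Λ g * φ (g x) * φ (g y)), sum_filter_of_ne]
  · simp only [conjForm_apply, map_mul, mul_assoc]
  · exact fun g _ hg => left_ne_zero_of_mul (left_ne_zero_of_mul hg)

section BoxPoint

variable {I : Type*} [Fintype I] {L : ℕ}

/-- The integral linear combination of the `ω i` with coefficients `n i ∈ {0, …, L - 1}`. -/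
def boxPoint {A : Type*} [AddCommMonoid A] (ω : I → A) (n : I → Fin L) : A :=
  ∑ i, (n i : ℕ) • ω i

theorem boxPoint_injective {V : Type*} [AddCommGroup V] [Module ℚ V] (b : Module.Basis I ℚ V) :
    Function.Injective (boxPoint (L := L) b) := by
  intro n m hnm
  have hrepr := congrArg b.repr hnm
  simp only [boxPoint, ← Nat.cast_smul_eq_nsmul ℚ] at hrepr
  ext i
  simpa only [b.repr_sum_self, Nat.cast_inj] using DFunLike.congr_fun hrepr i

theorem map_boxPoint {A B F : Type*} [AddCommMonoid A] [AddCommMonoid B] [FunLike F A B]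
    [AddMonoidHomClass F A B] (f : F) (ω : I → A) (n : I → Fin L) :
    f (boxPoint ω n) = boxPoint (fun i => f (ω i)) n := by
  simp only [boxPoint, map_sum, map_nsmul]

theorem norm_boxPoint_le (ω : I → ℂ) (n : I → Fin L) : ‖boxPoint ω n‖ ≤ (∑ i, ‖ω i‖) * L := by
  rw [boxPoint, sum_mul]
  refine norm_sum_le_of_le _ fun i _ => ?_
  rw [nsmul_eq_mul, norm_mul, Complex.norm_natCast, mul_comm]
  gcongr
  exact (n i).2.le

theorem house_boxPoint_le (ω : I → K) (n : I → Fin L) :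
    house (boxPoint ω n) ≤ (∑ i, house (ω i)) * L := by
  rw [boxPoint, sum_mul]
  refine (house_sum_le_sum_house _ _).trans (sum_le_sum fun i _ => ?_)
  rw [nsmul_eq_mul, house_nat_mul, mul_comm]
  exact mul_le_mul_of_nonneg_left (mod_cast (n i).2.le) (house_nonneg _)

theorem isIntegral_boxPoint {A : Type*} [CommRing A] {ω : I → A}
    (hω : ∀ i, IsIntegral ℤ (ω i)) (n : I → Fin L) : IsIntegral ℤ (boxPoint ω n) :=
  IsIntegral.sum _ fun i _ => (hω i).nsmul _

theorem conjForm_mul_boxPoint (ω : I → K) (x : K) (n : I → Fin L) :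
    conjForm φ Λ (x * boxPoint ω n) = boxPoint (fun i => conjForm φ Λ (x * ω i)) n := by
  simp only [boxPoint, mul_sum, mul_smul_comm, map_sum, map_nsmul]

variable {φ Λ}

theorem map_prod_pow_eq_exp {ω : I → K} {ε : I × I → K}
    (hε : ∀ ij, φ (ε ij) = Complex.exp (conjForm φ Λ (ω ij.1 * ω ij.2))) (s : I → ℕ)
    (n : I → Fin L) :
    φ (∏ ij, ε ij ^ (s ij.1 * (n ij.2 : ℕ))) =
      Complex.exp (∑ i, (s i : ℂ) * conjForm φ Λ (ω i * boxPoint ω n)) := by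
  simp only [map_prod, map_pow, hε, ← Complex.exp_nat_mul, ← Complex.exp_sum,
    conjForm_mul_boxPoint, Fintype.sum_prod_type]
  simp only [boxPoint, mul_sum, nsmul_eq_mul, Nat.cast_mul, mul_assoc]

end BoxPoint

variable {φ Λ}

/-- The coefficients expressing the conjugate `φ ∘ g` through the linear forms
`x ↦ conjForm φ Λ (b j * x)`. -/
noncomputable def conjCoeff {I : Type*} [Fintype I] [DecidableEq I] (φ : K →+* ℂ)
    (Λ : Gal(K/ℚ) → ℂ) (b : Module.Basis I ℚ K) (g : Gal(K/ℚ)) (j : I) : ℂ :=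
  φ (g ((Algebra.traceForm ℚ K).dualBasis (traceForm_nondegenerate ℚ K) b j)) / Λ g

theorem map_aut_eq_sum_conjForm [IsGalois ℚ K] {I : Type*} [Fintype I] [DecidableEq I]
    (b : Module.Basis I ℚ K) {g : Gal(K/ℚ)} (hg : Λ g ≠ 0) (x : K) :
    φ (g x) = ∑ j, conjCoeff φ Λ b g j * conjForm φ Λ (b j * x) := by
  classical
  calc φ (g x) = ∑ h, Λ h / Λ g * φ (h x) * φ (if g = h then 1 else 0) := by simp [hg]
    _ = _ := by
      simp only [← sum_aut_dualBasis_mul_aut_basis b, map_sum, mul_sum, conjForm_apply, conjCoeff]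
      rw [sum_comm]
      refine sum_congr rfl fun j _ => sum_congr rfl fun h _ => ?_
      simp only [map_mul]
      ring

/-- The system attached to a linear form in conjugates whose exponentials at the products of basis
elements are `φ (ε ij)`, evaluated at the points of a box of side `L`. -/
noncomputable def conjArithExpSystem [IsGalois ℚ K] {I : Type*} [Fintype I] [DecidableEq I]
    {b : Module.Basis I ℚ K} (hb : ∀ i, IsIntegral ℤ (b i)) {ε : I × I → K}
    (hε : ∀ ij, φ (ε ij) = Complex.exp (conjForm φ Λ (b ij.1 * b ij.2)))
    {D : ℤ} (hD : D ≠ 0) {H C₁ C₂ : ℝ} (hH : 1 ≤ H) (hDH : |(D : ℝ)| ≤ H)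
    (hval : ∀ N (c : I × I → ℕ), (∀ ij, c ij ≤ N) →
      IsIntegral ℤ ((D : K) ^ N * ∏ ij, ε ij ^ c ij) ∧
        house ((D : K) ^ N * ∏ ij, ε ij ^ c ij) ≤ H ^ N)
    (hC₁ : 1 ≤ C₁) (hhouse : ∀ g : Gal(K/ℚ), ∑ i, house (g (b i)) ≤ C₁)
    (hform : ∀ j, ∑ i, ‖conjForm φ Λ (b j * b i)‖ ≤ C₁)
    (hC₂ : ∀ g, ∑ j, ‖conjCoeff φ Λ b g j‖ ≤ C₂) (S : ℕ) {L : ℕ} (hL : 0 < L) :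
    ArithExpSystem φ (I → Fin L) I {g // Λ g ≠ 0} S (C₁ * L) (H ^ (S * L)) C₂ where
  dir g n := g.1 (boxPoint b n)
  freq j n := conjForm φ Λ (b j * boxPoint b n)
  val s n := (D : K) ^ (S * L) * ∏ ij, ε ij ^ (s ij.1 * (n ij.2 : ℕ))
  denom := (D : ℂ) ^ (S * L)
  freqCoeff j g := Λ g * φ (g.1 (b j))
  dirCoeff g := conjCoeff φ Λ b g
  one_le_dirBound := one_le_mul_of_one_le_of_one_le hC₁ (mod_cast hL)
  one_le_valBound := one_le_pow₀ hH
  isIntegral_dir g n := (isIntegral_boxPoint hb n).map (g.1.toAlgHom.restrictScalars ℤ)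
  house_dir_le g n := by
    rw [map_boxPoint]
    exact (house_boxPoint_le _ n).trans (by gcongr; exact hhouse g)
  norm_freq_le j n := by
    rw [conjForm_mul_boxPoint]
    exact (norm_boxPoint_le _ n).trans (by gcongr; exact hform j)
  isIntegral_val hs n := (hval _ _ fun ij => Nat.mul_le_mul (hs ij.1).le (n ij.2).2.le).1
  house_val_le hs n := (hval _ _ fun ij => Nat.mul_le_mul (hs ij.1).le (n ij.2).2.le).2
  map_val s n := by rw [map_mul, map_pow, map_intCast, map_prod_pow_eq_exp hε]
  denom_ne_zero := pow_ne_zero _ (mod_cast hD)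
  norm_denom_le := by
    rw [norm_pow, Complex.norm_intCast]
    gcongr
  freq_eq_sum j := by
    ext n
    simp [conjForm_mul_eq_sum_support]
  map_dir_eq_sum g := by
    ext n
    simpa using map_aut_eq_sum_conjForm b g.2 (boxPoint b n)
  sum_norm_dirCoeff_le g := hC₂ g

theorem exists_arithExpSystem [IsGalois ℚ K] {I : Type*} [Fintype I] (b : Module.Basis I ℚ K)
    (hb : ∀ i, IsIntegral ℤ (b i))
    (hexp : ∀ i j, ∃ y : K, φ y = Complex.exp (conjForm φ Λ (b i * b j))) :
    ∃ H C₁ C₂ : ℝ, 1 ≤ H ∧ 1 ≤ C₁ ∧ 0 ≤ C₂ ∧ ∀ S L : ℕ, 0 < L →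
      ∃ Y : ArithExpSystem φ (I → Fin L) I {g // Λ g ≠ 0} S (C₁ * L) (H ^ (S * L)) C₂,
        ∀ g, Function.Injective (Y.dir g) := by
  classical
  choose ε hε using fun ij : I × I => hexp ij.1 ij.2
  obtain ⟨D, H, hD, hH, hDH, hval⟩ := exists_denominator_forall_house_prod_pow_le ε
  obtain ⟨B₁, hB₁⟩ := Finite.bddAbove_range fun g : Gal(K/ℚ) => ∑ i, house (g (b i))
  obtain ⟨B₂, hB₂⟩ := Finite.bddAbove_range fun j => ∑ i, ‖conjForm φ Λ (b j * b i)‖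
  obtain ⟨B₃, hB₃⟩ := Finite.bddAbove_range fun g => ∑ j, ‖conjCoeff φ Λ b g j‖
  rw [mem_upperBounds, Set.forall_mem_range] at hB₁ hB₂ hB₃
  exact ⟨H, max 1 (max B₁ B₂), max 0 B₃, hH, le_max_left _ _, le_max_left _ _, fun S L hL =>
    ⟨conjArithExpSystem hb hε hD hH hDH hval (le_max_left _ _)
      (fun g => (hB₁ g).trans (by simp)) (fun j => (hB₂ j).trans (by simp))
      (fun g => (hB₃ g).trans (by simp)) S hL,
    fun g => g.1.injective.comp (boxPoint_injective b)⟩⟩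

theorem card_support_le_finrank_sub_one [IsGalois ℚ K] (h₁ : Λ 1 = 0) :
    Fintype.card {g // Λ g ≠ 0} ≤ Module.finrank ℚ K - 1 := by
  have hlt : Fintype.card {g // Λ g ≠ 0} < Fintype.card Gal(K/ℚ) :=
    Fintype.card_subtype_lt (x := 1) (by simpa using h₁)
  rw [← Nat.card_eq_fintype_card (α := Gal(K/ℚ)), IsGalois.card_aut_eq_finrank] at hlt
  lia

theorem eq_zero_of_forall_exp_conjForm_mem_range [IsGalois ℚ K]
    (hexp : ∀ x : 𝓞 K, ∃ y : K, φ y = Complex.exp (conjForm φ Λ x)) (h₁ : Λ 1 = 0) : Λ = 0 := by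
  by_contra hΛ
  obtain ⟨g, hg⟩ := Function.ne_iff.1 hΛ
  have hd : 1 ≤ Module.finrank ℚ K := Module.finrank_pos
  let b := integralBasis K
  have hcard : Fintype.card (Module.Free.ChooseBasisIndex ℤ (𝓞 K)) = Module.finrank ℚ K :=
    (Module.finrank_eq_card_basis b).symm
  have : Nonempty (Module.Free.ChooseBasisIndex ℤ (𝓞 K)) := Fintype.card_pos_iff.1 (by lia)
  have hexp_basis (i j) : ∃ y : K, φ y = Complex.exp (conjForm φ Λ (b i * b j)) := by
    simpa only [b, integralBasis_apply, map_mul] using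
      hexp (RingOfIntegers.basis K i * RingOfIntegers.basis K j)
  obtain ⟨H, C₁, C₂, hH, hC₁, hC₂, hsystem⟩ := exists_arithExpSystem (φ := φ) (Λ := Λ) b
    (fun i => integralBasis_apply K i ▸ (RingOfIntegers.basis K i).2) hexp_basis
  obtain ⟨Cs, hCs, hsiegel⟩ := ArithExpSystem.exists_forall_exists_auxSum_eq_zero K
  obtain ⟨S, T, L, M, hS, hL, hM, hST, hcount, hbound⟩ :=
    exists_extrapolationBound_lt_one hd (zero_le_one.trans hCs) hH hC₁ hC₂
  obtain ⟨Y, hY⟩ := hsystem S L hL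
  obtain ⟨p, hp₀, hp, hpM⟩ := hsiegel Y hS hM (card_support_le_finrank_sub_one h₁)
    (by simpa [hcard] using hcount)
  have hzero (N : ℕ) : ∀ s, (∀ i, s i < S) → ∀ l : List {g // Λ g ≠ 0}, l.length = N →
      Y.auxSum (fun n => (p n : K)) s l = 0 := by
    induction N using Nat.strong_induction_on with
    | _ N ih =>
      intro s hs l hl
      obtain hN | hN := lt_or_ge N M
      · exact hpM s hs l (hl ▸ hN)
      · obtain ⟨hR, hlt⟩ := hbound N hN
        exact Y.auxSum_eq_zero_of_forall_length_lt (by positivity) hR (hcard ▸ hST)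
          (fun n => (p n).2) hp (fun s hs l hl => ih _ hl s hs l rfl)
          (by simpa [extrapolationBound, hcard] using hlt) hs hl
  have hp_eq := Y.eq_zero_of_forall_auxSum_eq_zero hS (hY ⟨g, hg⟩)
    fun s hs l => hzero l.length s hs l rfl
  exact hp₀ (funext fun n => RingOfIntegers.coe_injective (congrFun hp_eq n))

end ConjForm

/-! ### Harmonic sums of periodic functions -/

section LogSeries

variable {w : ℂ}

theorem re_lt_one_of_norm_eq_one (hw : ‖w‖ = 1) (hw₁ : w ≠ 1) : w.re < 1 := by
  refine (hw ▸ Complex.re_le_norm w).lt_of_ne fun hre => hw₁ ?_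
  have hsq := Complex.sq_norm w
  rw [hw, Complex.normSq_apply, hre] at hsq
  exact Complex.ext hre (mul_self_eq_zero.1 (by linarith))

theorem exists_tendsto_sum_pow_div (hw : ‖w‖ = 1) (hw₁ : w ≠ 1) :
    ∃ l, Tendsto (fun N : ℕ => ∑ n ∈ range N, w ^ n / n) atTop (𝓝 l) := by
  have hbound (n : ℕ) : ‖∑ i ∈ range n, w ^ (i + 1)‖ ≤ 2 / ‖w - 1‖ := by
    simp only [pow_succ]
    rw [← sum_mul, norm_mul, hw, mul_one, geom_sum_eq hw₁, norm_div]
    gcongr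
    calc ‖w ^ n - 1‖ ≤ ‖w ^ n‖ + ‖(1 : ℂ)‖ := norm_sub_le _ _
      _ = 2 := by rw [norm_pow, hw]; norm_num
  have hanti : Antitone fun n : ℕ => 1 / ((n : ℝ) + 1) := fun m n hmn => by
    simp only
    gcongr
  obtain ⟨l, hl⟩ := cauchySeq_tendsto_of_complete
    (hanti.cauchySeq_series_mul_of_tendsto_zero_of_bounded
      tendsto_one_div_add_atTop_nhds_zero_nat hbound)
  refine ⟨l, (tendsto_add_atTop_iff_nat 1).1 (hl.congr fun n => ?_)⟩
  rw [sum_range_succ']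
  simp only [pow_zero, Nat.cast_zero, div_zero, add_zero]
  refine sum_congr rfl fun i _ => ?_
  rw [Complex.real_smul]
  push_cast
  ring

theorem tendsto_sum_pow_div (hw : ‖w‖ = 1) (hw₁ : w ≠ 1) :
    Tendsto (fun N : ℕ => ∑ n ∈ range N, w ^ n / n) atTop (𝓝 (-Complex.log (1 - w))) := by
  obtain ⟨l, hl⟩ := exists_tendsto_sum_pow_div hw hw₁
  have habel := tendsto_map'_iff.1 (Complex.tendsto_tsum_powerSeries_nhdsWithin_lt hl)
  have hlog : Tendsto (fun x : ℝ => -Complex.log (1 - x * w)) (𝓝[<] 1)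
      (𝓝 (-Complex.log (1 - w))) := by
    have hcont : ContinuousAt (fun x : ℝ => -Complex.log (1 - x * w)) 1 :=
      (ContinuousAt.clog (by fun_prop)
        (Or.inl (by simpa using re_lt_one_of_norm_eq_one hw hw₁))).neg
    simpa using hcont.tendsto.mono_left (nhdsWithin_le_nhds (s := Set.Iio 1))
  have heq : ∀ᶠ x : ℝ in 𝓝[<] 1, -Complex.log (1 - x * w) =
      ((fun z ↦ ∑' n : ℕ, w ^ n / n * z ^ n) ∘ Complex.ofReal) x := by
    filter_upwards [Ioo_mem_nhdsLT (zero_lt_one (α := ℝ))] with x hx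
    have hnorm : ‖x * w‖ < 1 := by
      rw [norm_mul, hw, mul_one, Complex.norm_real, Real.norm_of_nonneg hx.1.le]
      exact hx.2
    rw [← (Complex.hasSum_taylorSeries_neg_log hnorm).tsum_eq]
    refine tsum_congr fun n => ?_
    rw [mul_pow]
    ring
  rwa [tendsto_nhds_unique (hlog.congr' heq) habel]

end LogSeries

section FiniteFourier

variable {q : ℕ} [NeZero q]

/-- The unnormalised finite Fourier transform of `G` on `ZMod q` with respect to the additive
character `χ`, with values in an arbitrary commutative ring so that it can be formed both in a
cyclotomic field and in `ℂ`. -/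
def finDFT {R : Type*} [CommRing R] (χ : AddChar (ZMod q) R) (G : ZMod q → R) (b : ZMod q) : R :=
  ∑ a, G a * χ (-(a * b))

/-- `(1 / q) ∑_{b ≠ 0} Ĝ(b) · (-log (1 - ψ b))`, the value of `∑ G(n) / n` when `G` has mean
zero. -/
noncomputable def fourierLogSum (ψ : AddChar (ZMod q) ℂ) (G : ZMod q → ℂ) : ℂ :=
  1 / q * ∑ b ∈ univ.erase 0, finDFT ψ G b * -Complex.log (1 - ψ b)

variable {ψ : AddChar (ZMod q) ℂ} {G : ZMod q → ℂ}

theorem finDFT_zero : finDFT ψ G 0 = ∑ a, G a := by simp [finDFT]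

theorem sum_finDFT_mul {R : Type*} [CommRing R] [IsDomain R] {χ : AddChar (ZMod q) R}
    (hχ : χ.IsPrimitive) (G : ZMod q → R) (n : ZMod q) :
    ∑ b, finDFT χ G b * χ (b * n) = q * G n := by
  have hinner (a : ZMod q) : ∑ b, G a * χ (-(a * b)) * χ (b * n) =
      G a * if n - a = 0 then (q : R) else 0 := by
    have horth := AddChar.sum_mulShift (n - a) hχ
    rw [ZMod.card] at horth
    push_cast at horth
    rw [← horth, mul_sum]
    refine sum_congr rfl fun b _ => ?_
    rw [mul_assoc, ← AddChar.map_add_eq_mul]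
    ring_nf
  simp only [finDFT, sum_mul]
  rw [sum_comm, sum_congr rfl fun a _ => hinner a]
  simp only [sub_eq_zero, mul_ite, mul_zero, sum_ite_eq, mem_univ, if_true, mul_comm]

theorem sum_div_eq_finDFT (hψ : ψ.IsPrimitive) (s : Finset ℕ) :
    ∑ n ∈ s, G n / n = 1 / q * ∑ b, finDFT ψ G b * ∑ n ∈ s, ψ b ^ n / n := by
  have hq : (q : ℂ) ≠ 0 := NeZero.ne _
  simp only [mul_sum (s := s)]
  rw [sum_comm, mul_sum]
  refine sum_congr rfl fun n _ => ?_
  have hinv : G n = 1 / q * ∑ b, finDFT ψ G b * ψ (b * n) := by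
    rw [sum_finDFT_mul hψ]
    field_simp
  rw [hinv, mul_div_assoc, sum_div]
  refine congrArg _ (sum_congr rfl fun b _ => ?_)
  rw [← AddChar.map_nsmul_eq_pow, nsmul_eq_mul, mul_comm (n : ZMod q) b, mul_div_assoc]

theorem tendsto_sum_div_sub_mean_mul_harmonic (hψ : ψ.IsPrimitive) (G : ZMod q → ℂ) :
    Tendsto (fun N : ℕ => ∑ n ∈ range N, G n / n - (∑ a, G a) / q * ∑ n ∈ range N, 1 / (n : ℂ))
      atTop (𝓝 (fourierLogSum ψ G)) := by
  have hne {b : ZMod q} (hb : b ∈ univ.erase 0) : ψ b ≠ 1 := fun h =>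
    ne_of_mem_erase hb ((hψ.zmod_char_eq_one_iff q b).1 h)
  have hlim := (tendsto_finsetSum (univ.erase 0) fun b hb =>
    (tendsto_sum_pow_div (AddChar.norm_apply ψ b) (hne hb)).const_mul (finDFT ψ G b)).const_mul
      (1 / (q : ℂ))
  refine hlim.congr fun N => ?_
  rw [sum_div_eq_finDFT hψ, ← add_sum_erase univ _ (mem_univ (0 : ZMod q)), finDFT_zero]
  simp only [AddChar.map_zero_eq_one, one_pow]
  ring

theorem tendsto_sum_div_of_sum_eq_zero (hψ : ψ.IsPrimitive) (hG : ∑ a, G a = 0) :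
    Tendsto (fun N : ℕ => ∑ n ∈ range N, G n / n) atTop (𝓝 (fourierLogSum ψ G)) := by
  simpa only [hG, zero_div, zero_mul, sub_zero] using tendsto_sum_div_sub_mean_mul_harmonic hψ G

theorem sum_eq_zero_of_tendsto_sum_div {l : ℂ}
    (h : Tendsto (fun N : ℕ => ∑ n ∈ range N, G n / n) atTop (𝓝 l)) : ∑ a, G a = 0 := by
  have hq : (q : ℂ) ≠ 0 := NeZero.ne _
  by_contra hne
  have hψ := AddChar.zmodChar_primitive_of_primitive_root q
    (Complex.isPrimitiveRoot_exp q (NeZero.ne q))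
  have hharmonic := (((h.sub (tendsto_sum_div_sub_mean_mul_harmonic hψ G)).const_mul
    ((q : ℂ) / ∑ a, G a)).congr (f₂ := fun N : ℕ => ((∑ n ∈ range N, 1 / (n : ℝ) : ℝ) : ℂ))
      fun N => by push_cast; field_simp; ring).norm
  refine not_tendsto_nhds_of_tendsto_atTop ?_ _ hharmonic
  have hdiv := (not_summable_iff_tendsto_nat_atTop_of_nonneg fun n => by positivity).1
    Real.not_summable_one_div_natCast
  refine hdiv.congr fun N => ?_
  rw [Complex.norm_real, Real.norm_of_nonneg (sum_nonneg fun n _ => by positivity)]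

end FiniteFourier

section GaloisInvariance

open NumberField

variable {q : ℕ} [NeZero q] {K : Type*} [Field K] {χ : AddChar (ZMod q) K} {F : ZMod q → ℤ}

theorem isIntegral_finDFT_intCast (χ : AddChar (ZMod q) K) (F : ZMod q → ℤ) (b : ZMod q) :
    IsIntegral ℤ (finDFT χ (fun a => (F a : K)) b) := by
  refine IsIntegral.sum _ fun a _ => (isIntegral_algebraMap (x := F a)).mul ?_
  refine IsIntegral.of_pow (NeZero.pos q) ?_
  rw [← AddChar.map_nsmul_eq_pow]
  simpa using isIntegral_one

theorem map_finDFT_intCast {L : Type*} [Field L] (φ : K →+* L) (b : ZMod q) :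
    φ (finDFT χ (fun a => (F a : K)) b) =
      finDFT ((φ : K →* L).compAddChar χ) (fun a => (F a : L)) b := by
  simp [finDFT, MonoidHom.coe_compAddChar]

variable [NumberField K]

/-- The coefficients `g ↦ ∑_{b ≠ 0} φ(g F̂(b)) · (-log (1 - φ(χ b)))`, for which
`∑ F(t n) / n` is, up to the factor `1 / q`, the coefficient at the automorphism of `ℚ(ζ_q)`
belonging to `t⁻¹`. -/
noncomputable def logCoeff (φ : K →+* ℂ) (χ : AddChar (ZMod q) K) (F : ZMod q → ℤ)
    (g : Gal(K/ℚ)) : ℂ :=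
  ∑ b ∈ univ.erase 0, φ (g (finDFT χ (fun a => (F a : K)) b)) * -Complex.log (1 - φ (χ b))

variable {φ : K →+* ℂ}

theorem exists_intCast_eq_sum_aut [IsGalois ℚ K] {x : K} (hx : IsIntegral ℤ x) :
    ∃ m : ℤ, (m : K) = ∑ g : Gal(K/ℚ), g x := by
  obtain ⟨m, hm⟩ := IsIntegrallyClosed.isIntegral_iff.1
    (Algebra.isIntegral_trace (L := ℚ) hx)
  refine ⟨m, ?_⟩
  rw [← trace_eq_sum_automorphisms, ← hm]
  simp

theorem exists_map_eq_exp_conjForm_logCoeff [IsGalois ℚ K] (hχ : χ.IsPrimitive) (x : 𝓞 K) :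
    ∃ y : K, φ y = Complex.exp (conjForm φ (logCoeff φ χ F) x) := by
  choose m hm using fun b =>
    exists_intCast_eq_sum_aut <|
      (isIntegral_finDFT_intCast χ F b).mul (RingOfIntegers.isIntegral_coe x)
  refine ⟨∏ b ∈ univ.erase (0 : ZMod q), ((1 - χ b)⁻¹) ^ m b, ?_⟩
  have hform : conjForm φ (logCoeff φ χ F) x =
      ∑ b ∈ univ.erase (0 : ZMod q), (m b : ℂ) * -Complex.log (1 - φ (χ b)) := by
    simp only [conjForm_apply, logCoeff, sum_mul]
    rw [sum_comm]
    refine sum_congr rfl fun b _ => ?_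
    rw [← map_intCast φ, hm, map_sum, sum_mul]
    refine sum_congr rfl fun g _ => ?_
    rw [map_mul, map_mul]
    ring
  rw [hform, Complex.exp_sum, map_prod]
  refine prod_congr rfl fun b hb => ?_
  have hne : 1 - φ (χ b) ≠ 0 := fun h => ne_of_mem_erase hb <|
    (hχ.zmod_char_eq_one_iff q b).1 (φ.injective (by rw [map_one, ← sub_eq_zero.1 h]))
  rw [Complex.exp_int_mul, Complex.exp_neg, Complex.exp_log hne, map_zpow₀, map_inv₀, map_sub,
    map_one]

section Cyclotomic

open IsCyclotomicExtension.Rat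

variable [IsCyclotomicExtension {q} ℚ K]

theorem aut_addChar (g : Gal(K/ℚ)) (a : ZMod q) :
    g (χ a) = χ (galEquivZMod q K g * a) := by
  have hpow : χ a ^ q = 1 := by
    rw [← AddChar.map_nsmul_eq_pow]
    simp
  rw [galEquivZMod_apply_of_pow_eq q K g hpow, ← AddChar.map_nsmul_eq_pow, nsmul_eq_mul,
    ZMod.natCast_zmod_val]

theorem aut_finDFT_intCast (g : Gal(K/ℚ)) (b : ZMod q) :
    g (finDFT χ (fun a => (F a : K)) b) =
      finDFT χ (fun a => (F (((galEquivZMod q K g)⁻¹ : (ZMod q)ˣ) * a) : K)) b := by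
  simp only [finDFT, map_sum, map_mul, map_intCast, aut_addChar]
  refine Fintype.sum_equiv (Units.mulLeft (galEquivZMod q K g)) _ _ fun a => ?_
  rw [Units.mulLeft_apply, Units.inv_mul_cancel_left]
  ring_nf

theorem tendsto_sum_intCast_div_logCoeff (hχ : χ.IsPrimitive) (φ : K →+* ℂ)
    (hF : ∑ a, (F a : ℂ) = 0) (g : Gal(K/ℚ)) :
    Tendsto (fun N : ℕ => ∑ n ∈ range N,
      (F (((galEquivZMod q K g)⁻¹ : (ZMod q)ˣ) * n) : ℂ) / n) atTop
      (𝓝 (1 / q * logCoeff φ χ F g)) := by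
  have hsum : ∑ a, (F (((galEquivZMod q K g)⁻¹ : (ZMod q)ˣ) * a) : ℂ) = 0 := by
    rw [← hF]
    exact Fintype.sum_equiv (Units.mulLeft (galEquivZMod q K g)⁻¹) _ _ fun a => rfl
  have hlim := tendsto_sum_div_of_sum_eq_zero
    (hχ.compMulHom_of_isPrimitive (f := (φ : K →* ℂ)) φ.injective) hsum
  simpa only [fourierLogSum, logCoeff, aut_finDFT_intCast, map_finDFT_intCast,
    MonoidHom.coe_compAddChar, Function.comp_apply, MonoidHom.coe_coe] using hlim

end Cyclotomic

/-- The two `ℚ`-algebra structures on `CyclotomicField q ℚ` are equal, but not reducibly so. -/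
theorem isCyclotomicExtension_cyclotomicField_rat (q : ℕ) [NeZero q] :
    @IsCyclotomicExtension {q} ℚ (CyclotomicField q ℚ) _ _ DivisionRing.toRatAlgebra := by
  convert CyclotomicField.isCyclotomicExtension q ℚ
  · rfl
  · exact Subsingleton.elim _ _

theorem tendsto_sum_intCast_unit_mul_div_zero
    (h : Tendsto (fun N : ℕ => ∑ n ∈ range N, (F n : ℂ) / n) atTop (𝓝 0)) (t : (ZMod q)ˣ) :
    Tendsto (fun N : ℕ => ∑ n ∈ range N, (F (t * n) : ℂ) / n) atTop (𝓝 0) := by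
  let K := CyclotomicField q ℚ
  have := isCyclotomicExtension_cyclotomicField_rat q
  have : IsGalois ℚ K := IsCyclotomicExtension.isGalois {q} ℚ K
  have hζ := IsCyclotomicExtension.zeta_spec q ℚ K
  obtain ⟨χ, hχ⟩ : ∃ χ : AddChar (ZMod q) K, χ.IsPrimitive :=
    ⟨_, AddChar.zmodChar_primitive_of_primitive_root q hζ⟩
  obtain ⟨φ⟩ : Nonempty (K →+* ℂ) := inferInstance
  have hlim := tendsto_sum_intCast_div_logCoeff hχ φ (sum_eq_zero_of_tendsto_sum_div h)
  have hone : logCoeff φ χ F 1 = 0 := by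
    have hlim₁ := hlim 1
    simp only [map_one, inv_one, Units.val_one, one_mul] at hlim₁
    simpa [NeZero.ne q] using tendsto_nhds_unique hlim₁ h
  have hzero := eq_zero_of_forall_exp_conjForm_mem_range
    (fun x => exists_map_eq_exp_conjForm_logCoeff hχ x) hone
  have hlim_t := hlim ((IsCyclotomicExtension.Rat.galEquivZMod q K).symm t⁻¹)
  rw [hzero] at hlim_t
  simpa only [MulEquiv.apply_symm_apply, inv_inv, Pi.zero_apply, mul_zero] using hlim_t

end GaloisInvariance

/-! ### Abel's theorem for Dirichlet series -/

section AbelDirichlet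

theorem norm_sum_smul_le_of_antitone {E : Type*} [SeminormedAddCommGroup E] [NormedSpace ℝ E]
    {w : ℕ → ℝ} (hw : Antitone w) (hw₀ : ∀ n, 0 ≤ w n) {z : ℕ → E} {B : ℝ}
    (hz : ∀ n, ‖∑ i ∈ range n, z i‖ ≤ B) (n : ℕ) : ‖∑ i ∈ range n, w i • z i‖ ≤ w 0 * B := by
  have hlast : ‖w (n - 1) • ∑ i ∈ range n, z i‖ ≤ w (n - 1) * B := by
    rw [norm_smul, Real.norm_of_nonneg (hw₀ _)]
    exact mul_le_mul_of_nonneg_left (hz n) (hw₀ _)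
  have hdiff : ‖∑ i ∈ range (n - 1), (w (i + 1) - w i) • ∑ i ∈ range (i + 1), z i‖ ≤
      ∑ i ∈ range (n - 1), (w i - w (i + 1)) * B := by
    refine norm_sum_le_of_le _ fun i _ => ?_
    have hle := hw (Nat.le_succ i)
    rw [norm_smul, Real.norm_of_nonpos (by simpa using hle), neg_sub]
    exact mul_le_mul_of_nonneg_left (hz _) (by simpa using hle)
  rw [← sum_mul, Finset.sum_range_sub'] at hdiff
  rw [Finset.sum_range_by_parts]
  exact (norm_sub_le _ _).trans (by linarith)

variable {a : ℕ → ℂ}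

theorem LSeries_term_eq_rpow_smul_div (a : ℕ → ℂ) {n : ℕ} (hn : n ≠ 0) (s : ℝ) :
    LSeries.term a s n = (n : ℝ) ^ (1 - s) • (a n / n) := by
  have hn' : (n : ℂ) ≠ 0 := Nat.cast_ne_zero.2 hn
  rw [LSeries.term_of_ne_zero hn, Complex.real_smul, Complex.ofReal_cpow (by positivity),
    Complex.ofReal_sub, Complex.ofReal_one, Complex.ofReal_natCast, Complex.cpow_sub _ _ hn',
    Complex.cpow_one]
  field_simp

theorem tendsto_LSeries_term_one (a : ℕ → ℂ) (n : ℕ) :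
    Tendsto (fun s : ℝ => LSeries.term a s n) (𝓝[>] 1) (𝓝 (a n / n)) := by
  obtain rfl | hn := eq_or_ne n 0
  · simp
  have hcont : ContinuousAt (fun s : ℝ => (n : ℝ) ^ (1 - s) • (a n / n)) 1 :=
    ((Real.continuousAt_const_rpow (Nat.cast_ne_zero.2 hn)).comp' (by fun_prop)).smul
      continuousAt_const
  simpa [LSeries_term_eq_rpow_smul_div a hn] using
    hcont.tendsto.mono_left (nhdsWithin_le_nhds (s := Set.Ioi 1))

theorem norm_sum_term_add_le {T : ℕ} (hT : T ≠ 0) {B s : ℝ} (hs : 1 ≤ s)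
    (hB : ∀ n, ‖∑ i ∈ range n, a (T + i) / (T + i : ℕ)‖ ≤ B) (n : ℕ) :
    ‖∑ i ∈ range n, LSeries.term a s (T + i)‖ ≤ B := by
  have hanti : Antitone fun i : ℕ => ((T + i : ℕ) : ℝ) ^ (1 - s) := fun i j hij =>
    Real.rpow_le_rpow_of_nonpos (by positivity) (by simpa using hij) (by linarith)
  have hone : ((T + 0 : ℕ) : ℝ) ^ (1 - s) ≤ 1 :=
    Real.rpow_le_one_of_one_le_of_nonpos (by exact_mod_cast Nat.one_le_iff_ne_zero.2 hT)
      (by linarith)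
  calc ‖∑ i ∈ range n, LSeries.term a s (T + i)‖
      = ‖∑ i ∈ range n, ((T + i : ℕ) : ℝ) ^ (1 - s) • (a (T + i) / (T + i : ℕ))‖ := by
        refine congrArg _ (sum_congr rfl fun i _ => ?_)
        rw [LSeries_term_eq_rpow_smul_div a (by lia)]
    _ ≤ ((T + 0 : ℕ) : ℝ) ^ (1 - s) * B :=
        norm_sum_smul_le_of_antitone hanti (fun i => by positivity) hB n
    _ ≤ B := mul_le_of_le_one_left ((norm_nonneg _).trans (hB 0)) hone

theorem tendsto_LSeries_one_of_tendsto_sum_div (hsum : ∀ s : ℝ, 1 < s → LSeriesSummable a s)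
    {l : ℂ} (h : Tendsto (fun N : ℕ => ∑ n ∈ range N, a n / n) atTop (𝓝 l)) :
    Tendsto (fun s : ℝ => LSeries a s) (𝓝[>] 1) (𝓝 l) := by
  rw [Metric.tendsto_nhds]
  intro ε hε
  obtain ⟨T₀, hT₀⟩ := Metric.tendsto_atTop.1 h (ε / 8) (by positivity)
  let T := T₀ + 1
  have hhead := Metric.tendsto_nhds.1
    (tendsto_finsetSum (range T) fun n _ => tendsto_LSeries_term_one a n) (ε / 8) (by positivity)
  filter_upwards [hhead, self_mem_nhdsWithin] with s hs hs₁
  have hblock (n : ℕ) : ‖∑ i ∈ range n, a (T + i) / (T + i : ℕ)‖ ≤ ε / 4 := by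
    have hdist := (dist_triangle_right _ _ l).trans
      (add_le_add (hT₀ (T + n) (by lia)).le (hT₀ T (by lia)).le)
    rw [dist_eq_norm, sum_range_add, add_sub_cancel_left] at hdist
    linarith
  have htail : ‖LSeries a s - ∑ n ∈ range T, LSeries.term a s n‖ ≤ ε / 4 := by
    have hlim := ((tendsto_add_atTop_iff_nat T).2
      (hsum s hs₁).hasSum.tendsto_sum_nat).sub_const (∑ n ∈ range T, LSeries.term a s n)
    refine le_of_tendsto' hlim.norm fun N => ?_
    rw [add_comm N T, sum_range_add, add_sub_cancel_left]
    exact norm_sum_term_add_le T₀.succ_ne_zero (le_of_lt hs₁) hblock N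
  rw [← dist_eq_norm] at htail
  calc dist (LSeries a s) l
      ≤ dist (LSeries a s) (∑ n ∈ range T, LSeries.term a s n) +
        dist (∑ n ∈ range T, LSeries.term a s n) (∑ n ∈ range T, a n / n) +
        dist (∑ n ∈ range T, a n / n) l := dist_triangle4 _ _ _ _
    _ < ε := by linarith [hT₀ T (by lia)]

end AbelDirichlet

/-! ### Restriction to integers composed of primes dividing the modulus -/

section FactoredNumbers

theorem coprime_of_mem_factoredNumbers {q m k : ℕ}
    (hm : m ∈ Nat.factoredNumbers q.primeFactors) (hk : k.Coprime q) : m.Coprime k := by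
  by_contra h
  obtain ⟨p, hp, hpm, hpk⟩ := Nat.Prime.not_coprime_iff_dvd.1 h
  have hpq := Nat.dvd_of_mem_primeFactors (Nat.mem_factoredNumbers'.1 hm p hp hpm)
  exact Nat.Prime.not_coprime_iff_dvd.2 ⟨p, hp, hpk, hpq⟩ hk

theorem exists_factored_mul_coprime {q n : ℕ} (hq : q ≠ 0) (hn : n ≠ 0) :
    ∃ m ∈ Nat.factoredNumbers q.primeFactors, ∃ k : ℕ, k.Coprime q ∧ m * k = n := by
  induction n using induction_on_primes with
  | zero => exact absurd rfl hn
  | one => exact ⟨1, ⟨one_ne_zero, by simp⟩, 1, by simp, rfl⟩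
  | prime_mul p n hp ih =>
    obtain ⟨m, hm, k, hk, rfl⟩ := ih (right_ne_zero_of_mul hn)
    by_cases hpq : p ∣ q
    · refine ⟨p * m, Nat.mul_mem_factoredNumbers ⟨hp.ne_zero, fun r hr => ?_⟩ hm, k, hk, by ring⟩
      rw [Nat.primeFactorsList_prime hp, List.mem_singleton] at hr
      simp [hr, hp, hpq, hq]
    · exact ⟨m, hm, p * k, Nat.Coprime.mul_left ((Nat.Prime.coprime_iff_not_dvd hp).2 hpq) hk,
        by ring⟩

theorem factored_mul_coprime_injective {q m k m' k' : ℕ}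
    (hm : m ∈ Nat.factoredNumbers q.primeFactors) (hm' : m' ∈ Nat.factoredNumbers q.primeFactors)
    (hk : k.Coprime q) (hk' : k'.Coprime q) (h : m * k = m' * k') : m = m' ∧ k = k' := by
  obtain rfl : m = m' := Nat.dvd_antisymm
    ((coprime_of_mem_factoredNumbers hm hk').dvd_of_dvd_mul_right (h ▸ Dvd.intro _ rfl))
    ((coprime_of_mem_factoredNumbers hm' hk).dvd_of_dvd_mul_right (h ▸ Dvd.intro _ rfl))
  exact ⟨rfl, Nat.eq_of_mul_eq_mul_left (Nat.pos_of_ne_zero hm.1) h⟩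

theorem hasSum_indicator_factoredNumbers_inv (q : ℕ) :
    HasSum ((Nat.factoredNumbers q.primeFactors).indicator fun m : ℕ => (m : ℝ)⁻¹)
      (∏ p ∈ q.primeFactors, (1 - (p : ℝ)⁻¹)⁻¹) := by
  let f : ℕ →* ℝ := ⟨⟨fun n : ℕ => (n : ℝ)⁻¹, by simp⟩, by intro x y; simp [mul_comm]⟩
  have hf {p : ℕ} (hp : p.Prime) : ‖f p‖ < 1 := by
    simpa [f] using inv_lt_one_of_one_lt₀ (Nat.one_lt_cast.2 hp.one_lt : (1 : ℝ) < p)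
  have hsum := (EulerProduct.summable_and_hasSum_factoredNumbers_prod_filter_prime_geometric hf
    q.primeFactors).2
  rw [filter_true_of_mem fun p hp => Nat.prime_of_mem_primeFactors hp] at hsum
  exact hasSum_subtype_iff_indicator.1 hsum

end FactoredNumbers

section FactoredPart

variable {q : ℕ} {a : ℕ → ℂ} {C : ℝ}

/-- The arithmetic function `a` restricted to the integers all of whose prime factors divide
`q`. -/
noncomputable def factoredPart (q : ℕ) (a : ℕ → ℂ) : ℕ → ℂ :=
  (Nat.factoredNumbers q.primeFactors).indicator a

theorem norm_factoredPart_le (hC : ∀ n, ‖a n‖ ≤ C) (n : ℕ) : ‖factoredPart q a n‖ ≤ C :=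
  (norm_indicator_le_norm_self a n).trans (hC n)

theorem norm_term_factoredPart_one_le (hC : ∀ n, ‖a n‖ ≤ C) (n : ℕ) :
    ‖LSeries.term (factoredPart q a) 1 n‖ ≤
      C * (Nat.factoredNumbers q.primeFactors).indicator (fun m : ℕ => (m : ℝ)⁻¹) n := by
  by_cases hn : n ∈ Nat.factoredNumbers q.primeFactors
  · rw [Set.indicator_of_mem hn, LSeries.term_of_ne_zero hn.1, Complex.cpow_one, norm_div,
      Complex.norm_natCast, div_eq_mul_inv]
    gcongr
    exact norm_factoredPart_le hC n
  · simp [LSeries.term_def, factoredPart, hn]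

theorem summable_norm_term_factoredPart_one (hC : ∀ n, ‖a n‖ ≤ C) :
    Summable fun n => ‖LSeries.term (factoredPart q a) 1 n‖ :=
  .of_nonneg_of_le (fun _ => norm_nonneg _) (norm_term_factoredPart_one_le hC)
    ((hasSum_indicator_factoredNumbers_inv q).summable.mul_left C)

theorem tendsto_LSeries_factoredPart_one (hC : ∀ n, ‖a n‖ ≤ C) :
    Tendsto (fun s : ℝ => LSeries (factoredPart q a) s) (𝓝[>] 1)
      (𝓝 (LSeries (factoredPart q a) 1)) := by
  refine tendsto_tsum_of_dominated_convergence
    (summable_norm_term_factoredPart_one (q := q) hC) (fun n => ?_) ?_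
  · convert tendsto_LSeries_term_one (factoredPart q a) n using 2
    simp +contextual [LSeries.term_def]
  · filter_upwards [self_mem_nhdsWithin] with s hs n
    exact LSeries.norm_term_le_of_re_le_re _ (by simpa using le_of_lt hs) n

variable [NeZero q] {χ : DirichletCharacter ℂ q}

theorem convolution_factoredPart_char (ha₀ : a 0 = 0)
    (ha : ∀ m k : ℕ, k.Coprime q → a (m * k) = a m * χ (k : ZMod q)) :
    LSeries.convolution (factoredPart q a) (fun n : ℕ => χ (n : ZMod q)) = a := by
  rw [LSeries.convolution_def]
  funext n
  obtain rfl | hn := eq_or_ne n 0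
  · simp [ha₀]
  obtain ⟨m, hm, k, hk, rfl⟩ := exists_factored_mul_coprime (NeZero.ne q) hn
  rw [sum_eq_single (m, k)]
  · rw [factoredPart, Set.indicator_of_mem hm, ha m k hk]
  · rintro ⟨m', k'⟩ hmem hne
    rw [Nat.mem_divisorsAntidiagonal] at hmem
    by_cases hk' : k'.Coprime q
    · have hm' : m' ∉ Nat.factoredNumbers q.primeFactors := fun hm' => by
        obtain ⟨rfl, rfl⟩ := factored_mul_coprime_injective hm' hm hk' hk hmem.1
        exact hne rfl
      simp [factoredPart, hm']
    · have hnonunit : ¬ IsUnit (k' : ZMod q) := fun h => hk' ((ZMod.isUnit_iff_coprime _ _).1 h)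
      simp [χ.map_nonunit hnonunit]
  · intro h
    simp [hn] at h

theorem LSeries_eq_factoredPart_mul_LFunction (ha₀ : a 0 = 0) (hC : ∀ n, ‖a n‖ ≤ C)
    (ha : ∀ m k : ℕ, k.Coprime q → a (m * k) = a m * χ (k : ZMod q)) {s : ℝ} (hs : 1 < s) :
    LSeries a s = LSeries (factoredPart q a) s * χ.LFunction s := by
  have hs' : 1 < (s : ℂ).re := by simpa using hs
  rw [DirichletCharacter.LFunction_eq_LSeries χ hs', ← LSeries_convolution',
    convolution_factoredPart_char ha₀ ha]
  · exact LSeriesSummable_of_bounded_of_one_lt_re (fun n _ => norm_factoredPart_le hC n) hs'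
  · exact LSeriesSummable_of_bounded_of_one_lt_re (fun n _ => χ.norm_le_one _) hs'

theorem tendsto_ofReal_nhdsGT_one :
    Tendsto (fun s : ℝ => (s : ℂ)) (𝓝[>] 1) (𝓝[≠] 1) := by
  refine tendsto_nhdsWithin_iff.2 ⟨?_, ?_⟩
  · simpa using (Complex.continuous_ofReal.tendsto 1).mono_left nhdsWithin_le_nhds
  · filter_upwards [self_mem_nhdsWithin] with s hs
    exact Complex.ofReal_ne_one.2 (ne_of_gt hs)

theorem eq_zero_of_tendsto_mul_LFunction_zero (χ : DirichletCharacter ℂ q) {f : ℝ → ℂ} {c : ℂ}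
    (hf : Tendsto f (𝓝[>] 1) (𝓝 c))
    (h : Tendsto (fun s : ℝ => f s * χ.LFunction s) (𝓝[>] 1) (𝓝 0)) : c = 0 := by
  have hid := tendsto_ofReal_nhdsGT_one.mono_right nhdsWithin_le_nhds
  by_cases hχ : χ = 1
  · subst hχ
    have hres := hf.mul
      ((DirichletCharacter.LFunctionTrivChar_residue_one (N := q)).comp tendsto_ofReal_nhdsGT_one)
    have hprod : c * ∏ p ∈ q.primeFactors, (1 - (p : ℂ)⁻¹) = 0 :=
      tendsto_nhds_unique hres <| by
        simpa [DirichletCharacter.LFunctionTrivChar, mul_left_comm] using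
          (hid.sub_const 1).mul h
    refine (mul_eq_zero.1 hprod).resolve_right (prod_ne_zero_iff.2 fun p hp => ?_)
    simpa [sub_eq_zero, eq_comm (a := (1 : ℂ))] using
      (Nat.prime_of_mem_primeFactors hp).one_lt.ne'
  · have hL := ((DirichletCharacter.differentiable_LFunction hχ).continuous.tendsto 1).comp hid
    exact (mul_eq_zero.1 (tendsto_nhds_unique (hf.mul hL) h)).resolve_right
      (DirichletCharacter.LFunction_apply_one_ne_zero hχ)

theorem LSeries_factoredPart_one_eq_zero (ha₀ : a 0 = 0) (hC : ∀ n, ‖a n‖ ≤ C)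
    (ha : ∀ m k : ℕ, k.Coprime q → a (m * k) = a m * χ (k : ZMod q))
    (h : Tendsto (fun N : ℕ => ∑ n ∈ range N, a n / n) atTop (𝓝 0)) :
    LSeries (factoredPart q a) 1 = 0 := by
  have hsum (s : ℝ) (hs : 1 < s) : LSeriesSummable a s :=
    LSeriesSummable_of_bounded_of_one_lt_re (fun n _ => hC n) (by simpa using hs)
  refine eq_zero_of_tendsto_mul_LFunction_zero χ (tendsto_LSeries_factoredPart_one hC)
    ((tendsto_LSeries_one_of_tendsto_sum_div hsum h).congr' ?_)
  filter_upwards [self_mem_nhdsWithin] with s hs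
  exact LSeries_eq_factoredPart_mul_LFunction ha₀ hC ha hs

end FactoredPart

/-! ### A necessary condition on the modulus -/

section CharTwist

variable {q : ℕ} [NeZero q] {F : ZMod q → ℂ}

theorem exists_forall_norm_le_of_finite {α : Type*} [Finite α] (F : α → ℂ) :
    ∃ C, ∀ x, ‖F x‖ ≤ C := by
  obtain ⟨C, hC⟩ := Finite.bddAbove_range fun x => ‖F x‖
  exact ⟨C, fun x => hC ⟨x, rfl⟩⟩

/-- The `χ⁻¹`-isotypic part, up to the factor `φ(q)`, of `F` under the action of the units of
`ZMod q` by multiplication on the argument. -/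
noncomputable def charTwist (χ : DirichletCharacter ℂ q) (F : ZMod q → ℂ) (x : ZMod q) : ℂ :=
  ∑ t : (ZMod q)ˣ, χ t * F (t * x)

theorem charTwist_mul_unit (χ : DirichletCharacter ℂ q) (F : ZMod q → ℂ) (x : ZMod q)
    (u : (ZMod q)ˣ) : charTwist χ F (x * u) = charTwist χ F x * χ⁻¹ (u : ZMod q) := by
  rw [charTwist, ← Equiv.sum_comp (Equiv.mulRight u⁻¹), charTwist, sum_mul]
  refine sum_congr rfl fun t _ => ?_
  have harg : (t : ZMod q) * ((u⁻¹ : (ZMod q)ˣ) : ZMod q) * (x * u) = t * x := by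
    rw [mul_comm x, mul_assoc, Units.inv_mul_cancel_left]
  rw [MulChar.inv_apply, Ring.inverse_unit, Equiv.coe_mulRight, Units.val_mul, map_mul, harg]
  ring

theorem sum_charTwist (F : ZMod q → ℂ) (x : ZMod q) :
    ∑ χ : DirichletCharacter ℂ q, charTwist χ F x = q.totient * F x := by
  have horth (t : (ZMod q)ˣ) :
      ∑ χ : DirichletCharacter ℂ q, χ (t : ZMod q) = if t = 1 then (q.totient : ℂ) else 0 := by
    simpa [eq_comm (a := (1 : ZMod q))] using
      DirichletCharacter.sum_char_inv_mul_char_eq ℂ (n := q) (a := 1) isUnit_one t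
  simp only [charTwist]
  rw [sum_comm]
  simp [← sum_mul, horth]

theorem tendsto_sum_charTwist_div_zero
    (h : ∀ t : (ZMod q)ˣ, Tendsto (fun N : ℕ => ∑ n ∈ range N, F (t * n) / n) atTop (𝓝 0))
    (χ : DirichletCharacter ℂ q) :
    Tendsto (fun N : ℕ => ∑ n ∈ range N, charTwist χ F n / n) atTop (𝓝 0) := by
  have hsum := tendsto_finsetSum (univ : Finset (ZMod q)ˣ) fun t _ =>
    (h t).const_mul (χ (t : ZMod q))
  simp only [mul_zero, sum_const_zero] at hsum
  refine hsum.congr fun N => ?_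
  simp only [charTwist, mul_sum, sum_div]
  rw [sum_comm]
  exact sum_congr rfl fun n _ => sum_congr rfl fun t _ => (mul_div_assoc _ _ _).symm

theorem LSeries_factoredPart_charTwist_one_eq_zero (hF₀ : F 0 = 0)
    (h : ∀ t : (ZMod q)ˣ, Tendsto (fun N : ℕ => ∑ n ∈ range N, F (t * n) / n) atTop (𝓝 0))
    (χ : DirichletCharacter ℂ q) :
    LSeries (factoredPart q fun n => charTwist χ F n) 1 = 0 := by
  obtain ⟨C, hC⟩ := exists_forall_norm_le_of_finite (charTwist χ F)
  refine LSeries_factoredPart_one_eq_zero (χ := χ⁻¹) (by simp [charTwist, hF₀])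
    (fun n => hC n) (fun m k hk => ?_) (tendsto_sum_charTwist_div_zero h χ)
  obtain ⟨u, hu⟩ : IsUnit (k : ZMod q) := (ZMod.isUnit_iff_coprime _ _).2 hk
  rw [Nat.cast_mul, ← hu, charTwist_mul_unit]

theorem LSeries_factoredPart_one_eq_zero_of_forall_unit (hF₀ : F 0 = 0)
    (h : ∀ t : (ZMod q)ˣ, Tendsto (fun N : ℕ => ∑ n ∈ range N, F (t * n) / n) atTop (𝓝 0)) :
    LSeries (factoredPart q fun n => F n) 1 = 0 := by
  have hdecomp : ∑ χ : DirichletCharacter ℂ q, factoredPart q (fun n => charTwist χ F n) =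
      (q.totient : ℂ) • factoredPart q fun n => F n := by
    funext n
    by_cases hn : n ∈ Nat.factoredNumbers q.primeFactors <;>
      simp [factoredPart, hn, sum_charTwist]
  have hsum : LSeries (∑ χ : DirichletCharacter ℂ q, factoredPart q fun n => charTwist χ F n) 1 =
      0 := by
    rw [LSeries_sum fun χ _ => ?_]
    · exact sum_eq_zero fun χ _ => LSeries_factoredPart_charTwist_one_eq_zero hF₀ h χ
    · obtain ⟨C, hC⟩ := exists_forall_norm_le_of_finite (charTwist χ F)
      exact (summable_norm_term_factoredPart_one fun n => hC n).of_norm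
  rw [hdecomp, LSeries_smul] at hsum
  simpa [NeZero.ne q] using hsum

end CharTwist

section NecessaryCondition

variable {q : ℕ} {f : ℕ → ℤ}

theorem two_mul_norm_le_of_tsum_eq_zero {ι E : Type*} [NormedAddCommGroup E] [CompleteSpace E]
    {v : ι → E} {w : ι → ℝ} {W : ℝ} (hv : ∑' i, v i = 0) (hw : HasSum w W)
    (hvw : ∀ i, ‖v i‖ ≤ w i) (i : ι) : 2 * ‖v i‖ ≤ W := by
  classical
  have hrest : ‖∑' j, if j = i then 0 else v j‖ ≤ W - w i := by
    refine tsum_of_norm_bounded (hasSum_ite_sub_hasSum hw i) fun j => ?_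
    split_ifs
    · simp
    · exact hvw j
  have hsplit := (hw.summable.of_norm_bounded hvw).tsum_eq_add_tsum_ite i
  rw [hv, eq_comm, add_eq_zero_iff_eq_neg] at hsplit
  rw [← norm_neg, ← hsplit] at hrest
  linarith [hvw i]

theorem two_le_prod_primeFactors_of_tendsto_zero [NeZero q] {F : ZMod q → ℤ}
    (hF : ∀ x, |F x| ≤ 1) (hF₀ : F 0 = 0) (hF₁ : |F 1| = 1)
    (h : Tendsto (fun N : ℕ => ∑ n ∈ range N, (F n : ℂ) / n) atTop (𝓝 0)) :
    2 ≤ ∏ p ∈ q.primeFactors, (1 - (p : ℝ)⁻¹)⁻¹ := by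
  have hzero : LSeries (factoredPart q fun n => (F n : ℂ)) 1 = 0 :=
    LSeries_factoredPart_one_eq_zero_of_forall_unit (F := fun x => (F x : ℂ)) (by simp [hF₀])
      (tendsto_sum_intCast_unit_mul_div_zero h)
  have hbound (n : ℕ) : ‖(F n : ℂ)‖ ≤ 1 := by
    rw [Complex.norm_intCast]
    exact_mod_cast hF n
  have hone : ‖LSeries.term (factoredPart q fun n => (F n : ℂ)) 1 1‖ = 1 := by
    have hmem : 1 ∈ Nat.factoredNumbers q.primeFactors := ⟨one_ne_zero, by simp⟩
    rw [LSeries.term_of_ne_zero one_ne_zero, factoredPart, Set.indicator_of_mem hmem]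
    simpa [← Int.cast_abs] using hF₁
  have htwo := two_mul_norm_le_of_tsum_eq_zero hzero (hasSum_indicator_factoredNumbers_inv q)
    (fun n => by simpa using norm_term_factoredPart_one_le hbound n) 1
  rwa [hone, mul_one] at htwo

theorem IsErdosian.exists_zmod_lift [NeZero q] (hf : IsErdosian q f) :
    ∃ F : ZMod q → ℤ, ∀ n : ℕ, 1 ≤ n → F n = f n := by
  have hper (n k : ℕ) (hn : 1 ≤ n) : f (n + k * q) = f n := by
    induction k with
    | zero => simp
    | succ k ih => rw [add_mul, one_mul, ← add_assoc, hf.1 _ (by lia), ih]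
  have hq : 1 ≤ q := NeZero.one_le
  refine ⟨fun x => f (x.val + q), fun n hn => ?_⟩
  have hmod : n % q + q + n / q * q = n + q := by
    rw [add_right_comm, mul_comm, Nat.mod_add_div]
  simp only [ZMod.val_natCast]
  rw [← hper (n % q + q) (n / q) (by lia), hmod, hf.1 n hn]

theorem IsErdosian.abs_le_one (hf : IsErdosian q f) {n : ℕ} (hn : 1 ≤ n) :
    |f n| ≤ 1 := by
  by_cases hdvd : q ∣ n
  · simp [hf.2.2 n hn hdvd]
  · obtain h | h := hf.2.1 n hn hdvd <;> simp [h]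

theorem ErdosConjectureFalse.two_le_prod_primeFactors (h : ErdosConjectureFalse q)
    (hq : 1 < q) : 2 ≤ ∏ p ∈ q.primeFactors, (1 - (p : ℝ)⁻¹)⁻¹ := by
  obtain ⟨f, hf, hlim⟩ := h
  have : NeZero q := ⟨by lia⟩
  obtain ⟨F, hFf⟩ := hf.exists_zmod_lift
  refine two_le_prod_primeFactors_of_tendsto_zero (F := F) (fun x => ?_) ?_ ?_ ?_
  · have hx := hFf (x.val + q) (by lia)
    rw [Nat.cast_add, ZMod.natCast_self, add_zero, ZMod.natCast_zmod_val] at hx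
    exact hx ▸ hf.abs_le_one (by lia)
  · simpa [hf.2.2 q hq.le dvd_rfl] using hFf q hq.le
  · have hval := hf.2.1 1 le_rfl (Nat.not_dvd_of_pos_of_lt one_pos hq)
    rw [← hFf 1 le_rfl, Nat.cast_one] at hval
    obtain h | h := hval <;> simp [h]
  · rw [← tendsto_add_atTop_iff_nat 1]
    refine ((Complex.continuous_ofReal.tendsto 0).comp hlim).congr fun N => ?_
    have hterm (n : ℕ) (hn : n ∈ Icc 1 N) : ((f n / n : ℝ) : ℂ) = (F n : ℂ) / n := by
      rw [hFf n (mem_Icc.1 hn).1]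
      push_cast
      rfl
    rw [Function.comp_apply, Complex.ofReal_sum, sum_congr rfl hterm, range_eq_Ico,
      sum_eq_sum_Ico_succ_bot N.succ_pos]
    simp [Ico_add_one_right_eq_Icc]

end NecessaryCondition

section TotientInv

/-- The reciprocal `n ↦ 1 / φ(n)` of Euler's totient, with the value `0` at `0`. -/
noncomputable def totientInv : ArithmeticFunction ℝ := ⟨fun n => (n.totient : ℝ)⁻¹, by simp⟩

theorem totientInv_apply (n : ℕ) : totientInv n = (n.totient : ℝ)⁻¹ := rfl

theorem totientInv_nonneg (n : ℕ) : 0 ≤ totientInv n := by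
  rw [totientInv_apply]
  positivity

theorem isMultiplicative_totientInv : totientInv.IsMultiplicative :=
  ⟨by simp [totientInv_apply], fun h => by simp [totientInv_apply, Nat.totient_mul h, mul_comm]⟩

theorem inv_one_sub_inv_eq_one_add_totientInv {p : ℕ} (hp : p.Prime) :
    (1 - (p : ℝ)⁻¹)⁻¹ = 1 + totientInv p := by
  have hp₁ : (1 : ℝ) < p := Nat.one_lt_cast.2 hp.one_lt
  have hsub : (p : ℝ) - 1 ≠ 0 := by linarith
  rw [totientInv_apply, Nat.totient_prime hp, Nat.cast_sub hp.one_lt.le, Nat.cast_one]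
  field_simp
  ring

theorem squarefree_prod_primeFactors (q : ℕ) : Squarefree (∏ p ∈ q.primeFactors, p) :=
  squarefree_prod_of_pairwise_isCoprime
    (fun _ ha _ hb hab => Nat.coprime_iff_isRelPrime.1 ((Nat.coprime_primes
      (Nat.prime_of_mem_primeFactors ha) (Nat.prime_of_mem_primeFactors hb)).2 hab))
    fun _ hp => (Nat.prime_of_mem_primeFactors hp).prime.squarefree

theorem prod_primeFactors_le_sum_divisors_totientInv {q : ℕ} (hq : q ≠ 0) :
    ∏ p ∈ q.primeFactors, (1 - (p : ℝ)⁻¹)⁻¹ ≤ ∑ d ∈ q.divisors, totientInv d := by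
  have hrad := isMultiplicative_totientInv.prodPrimeFactors_one_add_of_squarefree
    (squarefree_prod_primeFactors q)
  rw [Nat.primeFactors_prod fun p hp => Nat.prime_of_mem_primeFactors hp] at hrad
  rw [prod_congr rfl fun p hp =>
    inv_one_sub_inv_eq_one_add_totientInv (Nat.prime_of_mem_primeFactors hp), hrad]
  exact sum_le_sum_of_subset_of_nonneg
    (Nat.divisors_subset_of_dvd hq (Nat.prod_primeFactors_dvd q)) fun d _ _ => totientInv_nonneg d

end TotientInv

/-! ### The Euler product -/

section OddWeight

/-- The weight `1 / (d φ(d))` on odd `d`, and `0` on even `d`; it is the limiting contribution of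
the divisor `d` to the first moment. -/
noncomputable def oddWeight (d : ℕ) : ℝ := if Odd d then (d : ℝ)⁻¹ * totientInv d else 0

theorem oddWeight_of_odd {d : ℕ} (hd : Odd d) : oddWeight d = (d : ℝ)⁻¹ * totientInv d :=
  if_pos hd

theorem oddWeight_of_not_odd {d : ℕ} (hd : ¬ Odd d) : oddWeight d = 0 := if_neg hd

theorem oddWeight_one : oddWeight 1 = 1 := by simp [oddWeight_of_odd, totientInv_apply]

theorem oddWeight_nonneg (d : ℕ) : 0 ≤ oddWeight d := by
  have := totientInv_nonneg d
  unfold oddWeight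
  split_ifs <;> positivity

theorem oddWeight_mul_of_coprime {m n : ℕ} (h : m.Coprime n) :
    oddWeight (m * n) = oddWeight m * oddWeight n := by
  by_cases hm : Odd m
  · by_cases hn : Odd n
    · rw [oddWeight_of_odd (hm.mul hn), isMultiplicative_totientInv.map_mul_of_coprime h,
        oddWeight_of_odd hm, oddWeight_of_odd hn, Nat.cast_mul, mul_inv, mul_mul_mul_comm]
    · simp [oddWeight, hn, Nat.odd_mul]
  · simp [oddWeight, hm, Nat.odd_mul]

theorem le_totient_sq_of_odd {n : ℕ} (hn : Odd n) : n ≤ n.totient ^ 2 := by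
  induction n using Nat.recOnPosPrimePosCoprime with
  | zero => simp
  | one => simp
  | prime_pow p k hp hk =>
    have hp₃ : 3 ≤ p := hp.two_le.lt_of_ne fun h =>
      Nat.not_odd_iff_even.2 even_two (h ▸ (Nat.odd_pow_iff hk.ne').1 hn)
    obtain ⟨k, rfl⟩ := Nat.exists_eq_add_one_of_ne_zero hk.ne'
    obtain ⟨r, rfl⟩ := Nat.exists_eq_add_of_le' hp₃
    rw [Nat.totient_prime_pow_succ hp, pow_succ, mul_pow]
    have hbase : r + 3 ≤ (r + 3 - 1) ^ 2 := by
      rw [Nat.add_sub_assoc (by lia)]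
      nlinarith
    exact Nat.mul_le_mul (Nat.le_self_pow two_ne_zero _) hbase
  | coprime a b _ _ hab iha ihb =>
    rw [Nat.odd_mul] at hn
    rw [Nat.totient_mul hab, mul_pow]
    exact Nat.mul_le_mul (iha hn.1) (ihb hn.2)

theorem summable_oddWeight : Summable oddWeight := by
  refine .of_nonneg_of_le oddWeight_nonneg (fun n => ?_)
    ((Real.summable_one_div_nat_rpow (p := 3 / 2)).2 (by norm_num))
  by_cases hn : Odd n
  · have hn₀ : (0 : ℝ) < n := Nat.cast_pos.2 hn.pos
    have hpow : (n : ℝ) ^ (3 / 2 : ℝ) = n * √n := by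
      rw [Real.sqrt_eq_rpow, ← Real.rpow_one_add' hn₀.le (by norm_num)]
      norm_num
    have hsqrt : √n ≤ n.totient :=
      Real.sqrt_le_iff.2 ⟨by positivity, by exact_mod_cast le_totient_sq_of_odd hn⟩
    rw [oddWeight_of_odd hn, totientInv_apply, ← mul_inv, ← one_div, hpow]
    gcongr
  · rw [oddWeight_of_not_odd hn]
    positivity

theorem oddWeight_prime_pow_succ {p : ℕ} (hp : p.Prime) (hodd : Odd p) (e : ℕ) :
    oddWeight (p ^ (e + 1)) = ((p : ℝ) * (p - 1))⁻¹ * (((p : ℝ) ^ 2)⁻¹) ^ e := by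
  rw [oddWeight_of_odd hodd.pow, totientInv_apply, Nat.totient_prime_pow_succ hp, inv_pow,
    ← mul_inv, ← mul_inv]
  push_cast [Nat.cast_sub hp.one_lt.le]
  ring

theorem tsum_oddWeight_pow_of_odd {p : ℕ} (hp : p.Prime) (hodd : Odd p) :
    ∑' e : ℕ, oddWeight (p ^ e) = 1 + (p : ℝ) / (((p : ℝ) - 1) * ((p : ℝ) ^ 2 - 1)) := by
  have hp₁ : (1 : ℝ) < p := Nat.one_lt_cast.2 hp.one_lt
  have hgeom := (hasSum_geometric_of_lt_one (by positivity)
    (inv_lt_one_of_one_lt₀ (by nlinarith : 1 < (p : ℝ) ^ 2))).mul_left ((p : ℝ) * (p - 1))⁻¹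
  simp only [← oddWeight_prime_pow_succ hp hodd] at hgeom
  rw [((hasSum_nat_add_iff (f := fun e => oddWeight (p ^ e)) 1).1 hgeom).tsum_eq, sum_range_one,
    pow_zero, oddWeight_one, add_comm]
  have hsub : (p : ℝ) - 1 ≠ 0 := by linarith
  have hsq : (p : ℝ) ^ 2 - 1 ≠ 0 := by nlinarith
  field_simp

theorem tsum_oddWeight_pow_of_not_odd {p : ℕ} (hodd : ¬ Odd p) :
    ∑' e : ℕ, oddWeight (p ^ e) = 1 := by
  rw [tsum_eq_single 0 fun e he => oddWeight_of_not_odd (by rwa [Nat.odd_pow_iff he]), pow_zero,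
    oddWeight_one]

theorem tsum_oddWeight_eq_tprod :
    ∑' n, oddWeight n = ∏' p : {p : ℕ // p.Prime ∧ Odd p},
      (1 + ((p : ℕ) : ℝ) / ((((p : ℕ) : ℝ) - 1) * (((p : ℕ) : ℝ) ^ 2 - 1))) := by
  have heuler := EulerProduct.eulerProduct_hasProd oddWeight_one oddWeight_mul_of_coprime
    summable_oddWeight.norm (oddWeight_of_not_odd (by simp))
  let toPrimes : {p : ℕ // p.Prime ∧ Odd p} → Nat.Primes := fun p => ⟨p.1, p.2.1⟩
  have hinj : Function.Injective toPrimes := fun a b hab =>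
    Subtype.ext (congrArg (fun p : Nat.Primes => (p : ℕ)) hab)
  rw [← heuler.tprod_eq, ← hinj.tprod_eq]
  · exact tprod_congr fun p => tsum_oddWeight_pow_of_odd p.2.1 p.2.2
  · intro p hp
    by_cases hodd : Odd (p : ℕ)
    · exact ⟨⟨p.1, p.2, hodd⟩, rfl⟩
    · exact absurd (tsum_oddWeight_pow_of_not_odd hodd) hp

end OddWeight

/-! ### Counting moduli -/

section Counting

theorem abs_card_Ioc_modEq_sub_div_le_one (X : ℕ) {r : ℕ} (hr : 0 < r) (v : ℕ) :
    |(#{x ∈ Ioc 0 X | x ≡ v [MOD r]} : ℝ) - X / r| ≤ 1 := by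
  suffices hrat : |(#{x ∈ Ioc 0 X | x ≡ v [MOD r]} : ℚ) - X / r| ≤ 1 by
    have hreal := (Rat.cast_le (K := ℝ)).2 hrat
    push_cast at hreal
    exact hreal
  have hcard := Nat.Ioc_filter_modEq_card 0 X hr v
  have hdiff : ((X : ℚ) - v) / r - (((0 : ℕ) : ℚ) - v) / r = X / r := by
    rw [← sub_div]
    push_cast
    ring
  generalize ((X : ℚ) - v) / r = A at hcard hdiff
  generalize (((0 : ℕ) : ℚ) - v) / r = B at hcard hdiff
  have hBA : B ≤ A := sub_nonneg.1 (hdiff ▸ by positivity)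
  rw [max_eq_left (sub_nonneg.2 (Int.floor_le_floor hBA))] at hcard
  have hcard' : (#{x ∈ Ioc 0 X | x ≡ v [MOD r]} : ℚ) = ⌊A⌋ - ⌊B⌋ := by exact_mod_cast hcard
  rw [hcard', ← hdiff, abs_le]
  constructor <;> linarith [Int.floor_le A, Int.lt_floor_add_one A, Int.floor_le B,
    Int.lt_floor_add_one B]

/-- The integers `q ≤ X` with `q ≡ 1 (mod 4)`. -/
def oneModFour (X : ℕ) : Finset ℕ := {q ∈ Icc 1 X | q % 4 = 1}

/-- The number of multiples of `d` among the `q ≤ X` with `q ≡ 1 (mod 4)`, divided by `X / 4`. -/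
noncomputable def multiplesDensity (d X : ℕ) : ℝ :=
  (#{q ∈ oneModFour X | d ∣ q} : ℝ) / ((X : ℝ) / 4)

variable {d X : ℕ}

theorem mem_oneModFour {q : ℕ} : q ∈ oneModFour X ↔ (1 ≤ q ∧ q ≤ X) ∧ q % 4 = 1 := by
  rw [oneModFour, mem_filter, mem_Icc]

theorem odd_of_mem_oneModFour {q : ℕ} (hq : q ∈ oneModFour X) : Odd q := by
  rw [mem_oneModFour] at hq
  exact Nat.odd_iff.2 (by lia)

theorem multiplesDensity_nonneg (d X : ℕ) : 0 ≤ multiplesDensity d X := by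
  unfold multiplesDensity
  positivity

theorem multiplesDensity_of_not_odd (hd : ¬ Odd d) : multiplesDensity d X = 0 := by
  have hempty : {q ∈ oneModFour X | d ∣ q} = ∅ :=
    filter_eq_empty_iff.2 fun q hq hdq => hd ((odd_of_mem_oneModFour hq).of_dvd_nat hdq)
  simp [multiplesDensity, hempty]

theorem multiplesDensity_of_lt (hX : X < d) : multiplesDensity d X = 0 := by
  have hempty : {q ∈ oneModFour X | d ∣ q} = ∅ := filter_eq_empty_iff.2 fun q hq hdq => by
    rw [mem_oneModFour] at hq
    have := Nat.le_of_dvd (by lia) hdq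
    lia
  simp [multiplesDensity, hempty]

theorem abs_card_multiples_sub_le_one (hd : Odd d) (X : ℕ) :
    |(#{q ∈ oneModFour X | d ∣ q} : ℝ) - X / (4 * d)| ≤ 1 := by
  have hcop : Nat.Coprime 4 d := by
    simpa using Nat.Coprime.pow_left 2 (Nat.coprime_two_left.2 hd)
  let v := Nat.chineseRemainder hcop 1 0
  have hfilter : {q ∈ oneModFour X | d ∣ q} = {x ∈ Ioc 0 X | x ≡ v [MOD 4 * d]} := by
    ext x
    have hfour : x ≡ v [MOD 4] ↔ x % 4 = 1 :=
      ⟨fun h => h.trans v.2.1, fun h => (show x ≡ 1 [MOD 4] from h).trans v.2.1.symm⟩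
    have hdvd : x ≡ v [MOD d] ↔ d ∣ x := by
      rw [← Nat.modEq_zero_iff_dvd]
      exact ⟨fun h => h.trans v.2.2, fun h => h.trans v.2.2.symm⟩
    rw [mem_filter, mem_oneModFour, mem_filter, mem_Ioc,
      ← Nat.modEq_and_modEq_iff_modEq_mul hcop, hfour, hdvd, and_assoc, Nat.one_le_iff_ne_zero,
      Nat.pos_iff_ne_zero]
  have hcard := abs_card_Ioc_modEq_sub_div_le_one X (r := 4 * d) (by have := hd.pos; lia) v
  rw [hfilter]
  exact_mod_cast hcard

theorem abs_multiplesDensity_sub_inv_le (hd : Odd d) (hX : 0 < X) :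
    |multiplesDensity d X - (d : ℝ)⁻¹| ≤ 4 / X := by
  have : (0 : ℝ) < X := Nat.cast_pos.2 hX
  have hd₀ : (0 : ℝ) < d := Nat.cast_pos.2 hd.pos
  have heq : multiplesDensity d X - (d : ℝ)⁻¹ =
      ((#{q ∈ oneModFour X | d ∣ q} : ℝ) - X / (4 * d)) * (4 / X) := by
    unfold multiplesDensity
    field_simp
  rw [heq, abs_mul, abs_of_pos (show (0 : ℝ) < 4 / X by positivity)]
  exact mul_le_of_le_one_left (by positivity) (abs_card_multiples_sub_le_one hd X)

theorem tendsto_multiplesDensity (hd : Odd d) :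
    Tendsto (multiplesDensity d) atTop (𝓝 (d : ℝ)⁻¹) := by
  rw [tendsto_iff_norm_sub_tendsto_zero]
  refine squeeze_zero' (.of_forall fun _ => norm_nonneg _) ?_
    (tendsto_const_div_atTop_nhds_zero_nat 4)
  filter_upwards [eventually_gt_atTop 0] with X hX
  exact abs_multiplesDensity_sub_inv_le hd hX

theorem multiplesDensity_le (hd : Odd d) (X : ℕ) : multiplesDensity d X ≤ 5 * (d : ℝ)⁻¹ := by
  obtain hlt | hle := lt_or_ge X d
  · rw [multiplesDensity_of_lt hlt]
    positivity
  · have hd₀ : (0 : ℝ) < d := Nat.cast_pos.2 hd.pos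
    have hclose := (abs_le.1 (abs_multiplesDensity_sub_inv_le hd (hd.pos.trans_le hle))).2
    have hinv : (4 : ℝ) / X ≤ 4 * (d : ℝ)⁻¹ := by
      rw [div_eq_mul_inv]
      gcongr
    linarith

theorem totientInv_mul_multiplesDensity_le (d X : ℕ) :
    totientInv d * multiplesDensity d X ≤ 5 * oddWeight d := by
  by_cases hd : Odd d
  · rw [oddWeight_of_odd hd]
    nlinarith [mul_le_mul_of_nonneg_left (multiplesDensity_le hd X) (totientInv_nonneg d)]
  · rw [multiplesDensity_of_not_odd hd, oddWeight_of_not_odd hd, mul_zero, mul_zero]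

theorem tendsto_totientInv_mul_multiplesDensity (d : ℕ) :
    Tendsto (fun X => totientInv d * multiplesDensity d X) atTop (𝓝 (oddWeight d)) := by
  by_cases hd : Odd d
  · rw [oddWeight_of_odd hd, mul_comm]
    exact (tendsto_multiplesDensity hd).const_mul _
  · simp [multiplesDensity_of_not_odd hd, oddWeight_of_not_odd hd]

theorem tendsto_tsum_totientInv_mul_multiplesDensity :
    Tendsto (fun X => ∑' d, totientInv d * multiplesDensity d X) atTop (𝓝 (∑' d, oddWeight d)) :=
  tendsto_tsum_of_dominated_convergence (summable_oddWeight.mul_left 5)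
    tendsto_totientInv_mul_multiplesDensity (.of_forall fun X d => by
      rw [Real.norm_of_nonneg (mul_nonneg (totientInv_nonneg d) (multiplesDensity_nonneg d X))]
      exact totientInv_mul_multiplesDensity_le d X)

theorem sum_sum_divisors_div_eq_tsum (f : ℕ → ℝ) (X : ℕ) :
    (∑ q ∈ oneModFour X, ∑ d ∈ q.divisors, f d) / ((X : ℝ) / 4) =
      ∑' d, f d * multiplesDensity d X := by
  rw [tsum_eq_sum (s := range (X + 1)) fun d hd => by
    rw [multiplesDensity_of_lt (by simpa using hd), mul_zero]]
  rw [sum_comm' (t' := range (X + 1)) (s' := fun d => {q ∈ oneModFour X | d ∣ q}), sum_div]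
  · refine sum_congr rfl fun d _ => ?_
    rw [sum_const, nsmul_eq_mul, multiplesDensity, mul_comm, mul_div_assoc]
  · intro q d
    simp only [mem_filter, Nat.mem_divisors, mem_range, mem_oneModFour]
    refine ⟨fun h => ⟨⟨h.1, h.2.1⟩, ?_⟩, fun h => ⟨h.1.1, h.1.2, by lia⟩⟩
    have := Nat.le_of_dvd (by lia) h.2.1
    lia

theorem one_le_sum_divisors_totientInv {q : ℕ} (hq : q ≠ 0) :
    1 ≤ ∑ d ∈ q.divisors, totientInv d := by
  have hone : totientInv 1 = 1 := isMultiplicative_totientInv.map_one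
  exact hone ▸ single_le_sum (fun d _ => totientInv_nonneg d) (Nat.one_mem_divisors.2 hq)

open scoped Classical in
theorem card_erdosConjectureFalse_le (X : ℕ) :
    (#{q ∈ Icc 1 X | q % 4 = 1 ∧ ErdosConjectureFalse q} : ℝ) ≤
      1 + (∑ q ∈ oneModFour X, ∑ d ∈ q.divisors, totientInv d - #(oneModFour X)) := by
  rw [← filter_filter, ← oneModFour]
  have hpred : #{q ∈ oneModFour X | ErdosConjectureFalse q} ≤
      1 + #({q ∈ oneModFour X | ErdosConjectureFalse q}.erase 1) := by
    have := pred_card_le_card_erase (s := {q ∈ oneModFour X | ErdosConjectureFalse q}) (a := 1)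
    lia
  refine (Nat.cast_le.2 hpred).trans ?_
  rw [Nat.cast_add, Nat.cast_one, card_eq_sum_ones, Nat.cast_sum, card_eq_sum_ones (oneModFour X),
    Nat.cast_sum, ← sum_sub_distrib, Nat.cast_one]
  gcongr
  have hpos {q : ℕ} (hq : q ∈ oneModFour X) : q ≠ 0 := (odd_of_mem_oneModFour hq).pos.ne'
  refine (sum_le_sum fun q hq => ?_).trans (sum_le_sum_of_subset_of_nonneg
    ((erase_subset _ _).trans (filter_subset _ _)) fun q hq _ =>
      sub_nonneg.2 (one_le_sum_divisors_totientInv (hpos hq)))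
  obtain ⟨hq₁, hq⟩ := mem_erase.1 hq
  obtain ⟨hq, hfalse⟩ := mem_filter.1 hq
  have hq₀ := hpos hq
  linarith [hfalse.two_le_prod_primeFactors (by lia),
    prod_primeFactors_le_sum_divisors_totientInv hq₀]

open scoped Classical in
theorem card_erdosConjectureFalse_div_le (X : ℕ) :
    (#{q ∈ Icc 1 X | q % 4 = 1 ∧ ErdosConjectureFalse q} : ℝ) / ((X : ℝ) / 4) ≤
      4 / X + (∑' d, totientInv d * multiplesDensity d X - multiplesDensity 1 X) := by
  have hone : multiplesDensity 1 X = #(oneModFour X) / ((X : ℝ) / 4) := by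
    simp [multiplesDensity]
  rw [← sum_sum_divisors_div_eq_tsum, hone, ← sub_div, ← one_div_div (X : ℝ) 4, ← add_div]
  gcongr
  exact card_erdosConjectureFalse_le X

end Counting

open scoped Classical in
theorem erdos_false_density_first_moment :
    atTop.limsup (fun X : ℕ =>
      (((Finset.Icc 1 X).filter
        (fun q => q % 4 = 1 ∧ ErdosConjectureFalse q)).card : ℝ) / ((X : ℝ) / 4)) ≤
      (∏' p : {p : ℕ // p.Prime ∧ Odd p},
        (1 + ((p : ℕ) : ℝ) / ((((p : ℕ) : ℝ) - 1) * (((p : ℕ) : ℝ) ^ 2 - 1)))) - 1 := by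
  have hlim : Tendsto (fun X : ℕ => (4 : ℝ) / X +
      (∑' d, totientInv d * multiplesDensity d X - multiplesDensity 1 X)) atTop
      (𝓝 (∑' d, oddWeight d - 1)) := by
    simpa using (tendsto_const_div_atTop_nhds_zero_nat (4 : ℝ)).add
      (tendsto_tsum_totientInv_mul_multiplesDensity.sub (tendsto_multiplesDensity odd_one))
  rw [← tsum_oddWeight_eq_tprod, ← hlim.limsup_eq]
  exact limsup_le_limsup (.of_forall card_erdosConjectureFalse_div_le)
    (isCoboundedUnder_le_of_le (x := 0) atTop fun X => by positivity) hlim.isBoundedUnder_le
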